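/- arXiv:1912.07194 — 2 statements merged into one kernel-verified Lean document; each statement's English description precedes it below -/
import Mathlib

section
/- Let A^(1), …, A^(L) ∈ ℝ^{n×n} be symmetric matrices and let f(Q) = Σ_{ℓ=1}^L Σ_{k=1}^n ((Q^T A^(ℓ) Q)_{kk})². Then for any starting point Q₀ ∈ O(n), every Jacobi-G sequence {Q_k} for f converges to a single limit point Q* ∈ O(n), and Q* is a stationary point of f restricted to O(n), i.e. ProjGrad f(Q*) = 0. -/
open Matrix BigOperators Filter

/-- Frobenius norm of a real matrix. -/
noncomputable def frobR {n : ℕ} (A : Matrix (Fin n) (Fin n) ℝ) : ℝ :=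
  Real.sqrt (∑ i, ∑ j, (A i j) ^ 2)

/-- `g` is the Euclidean gradient of `f : ℝ^{n×n} → ℝ`. -/
def IsGradR {n : ℕ} (f : Matrix (Fin n) (Fin n) ℝ → ℝ)
    (g : Matrix (Fin n) (Fin n) ℝ → Matrix (Fin n) (Fin n) ℝ) : Prop :=
  ∀ Q H, HasDerivAt (fun t : ℝ => f (Q + t • H)) (∑ i, ∑ j, g Q i j * H i j) 0

/-- Riemannian (projected) gradient on O(n): `Q (Λ - Λᵀ)/2` with `Λ = Qᵀ ∇f(Q)`. -/
noncomputable def projGradR {n : ℕ}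
    (g : Matrix (Fin n) (Fin n) ℝ → Matrix (Fin n) (Fin n) ℝ)
    (Q : Matrix (Fin n) (Fin n) ℝ) : Matrix (Fin n) (Fin n) ℝ :=
  Q * ((1 / 2 : ℝ) • (Qᵀ * g Q - (Qᵀ * g Q)ᵀ))

/-- Givens rotation `G(i,j,θ)`: identity except `G_{ii} = G_{jj} = cos θ`,
`G_{ij} = −sin θ`, `G_{ji} = sin θ`. -/
noncomputable def givensR (n : ℕ) (i j : Fin n) (θ : ℝ) : Matrix (Fin n) (Fin n) ℝ :=
  fun a b =>
    if a = i ∧ b = i then Real.cos θ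
    else if a = j ∧ b = j then Real.cos θ
    else if a = i ∧ b = j then -Real.sin θ
    else if a = j ∧ b = i then Real.sin θ
    else if a = b then 1 else 0

/-!
Along the orthogonal group the differential of the diagonal energy `f` lies in the ideal generated
by the couplings `Γ i j`, which are the components of the Riemannian gradient. A Łojasiewicz
inequality for `f` follows algebraically: if `f ∈ I` and `df ∈ I Ω` in a finitely generated algebra
over a field of characteristic zero, then `f ^ d ∈ I ^ (d + 1)` for some `d`. Indeed, on the chart
`R[I/f]` of the blow-up along `I` the ideal `I` becomes `(f)`, so `df ∈ f Ω` there. After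
normalizing and localizing at a height one prime containing `f`, the ring is a discrete valuation
ring with uniformizer `t`, and the Euler derivation `t ∂/∂t` modulo a power of `t` contradicts
`df ∈ f Ω` unless `f` is a unit. Hence `f` is a unit in `R[I/f]`, which is the claim.

Restricted to a plane rotation, `f` is a constant plus a sinusoid in `4θ`, so an exact line search
with the smallest angle gains at least a multiple of `|Γ i j| |θ|`. Concavity of `x ^ ε` then turns
the Łojasiewicz inequality into `∑ |θ k| < ∞`.
-/

open scoped KaehlerDifferential

section AlgebraicLojasiewicz

open IsLocalRing nonZeroDivisors Polynomial

variable {k : Type*} [Field k]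

theorem kaehlerD_map_mem_smul_top {A B : Type*} [CommRing A] [CommRing B] [Algebra k A]
    [Algebra k B] (φ : A →ₐ[k] B) {I : Ideal A} {a : A}
    (h : KaehlerDifferential.D k A a ∈ I • (⊤ : Submodule A Ω[A⁄k])) :
    KaehlerDifferential.D k B (φ a) ∈ I.map φ • (⊤ : Submodule B Ω[B⁄k]) := by
  let := φ.toRingHom.toAlgebra
  have : IsScalarTower k A B := .of_algebraMap_eq fun x ↦ (φ.commutes x).symm
  rw [show φ a = algebraMap A B a from rfl, ← KaehlerDifferential.map_D k k A B]
  refine Submodule.smul_induction_on h (fun r hr ω _ ↦ ?_) fun x y hx hy ↦ ?_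
  · rw [map_smul, algebra_compatible_smul B r]
    exact Submodule.smul_mem_smul (Ideal.mem_map_of_mem _ hr) trivial
  · rw [map_add]
    exact add_mem hx hy

theorem derivation_apply_mem_mul {A : Type*} [CommRing A] [Algebra k A] {I J : Ideal A} {a : A}
    (h : KaehlerDifferential.D k A a ∈ I • (⊤ : Submodule A Ω[A⁄k])) (E : Derivation k A A)
    (hE : ∀ w, E w ∈ J) : E a ∈ I * J := by
  have hJ : Submodule.map E.liftKaehlerDifferential ⊤ ≤ J := by
    rw [← KaehlerDifferential.span_range_derivation, Submodule.map_span, Submodule.span_le]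
    rintro - ⟨-, ⟨w, rfl⟩, rfl⟩
    simpa using hE w
  have hEa := Submodule.mem_map_of_mem (f := E.liftKaehlerDifferential) h
  rw [Submodule.map_smul'', E.liftKaehlerDifferential_comp_D] at hEa
  exact Ideal.mul_mono_right hJ hEa

section Euler

variable {B : Type*} [CommRing B] [IsLocalRing B] [Algebra k B]

theorem exists_section_residue_of_isNilpotent [Algebra.FormallySmooth k (ResidueField B)]
    (h : IsNilpotent (maximalIdeal B)) :
    ∃ σ : ResidueField B →ₐ[k] B, ∀ x, residue B (σ x) = x := by
  let π := IsScalarTower.toAlgHom k B (ResidueField B)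
  have hker : IsNilpotent (RingHom.ker π) := by
    convert h
    exact ker_residue
  exact ⟨Algebra.FormallySmooth.liftOfSurjective (.id k _) π residue_surjective hker,
    Algebra.FormallySmooth.liftOfSurjective_apply (.id k _) π residue_surjective hker⟩

variable {σ : ResidueField B →ₐ[k] B} {t : B}

theorem eval₂AlgHom_surjective (hσ : ∀ x, residue B (σ x) = x)
    (ht : maximalIdeal B = Ideal.span {t}) (hn : IsNilpotent t) :
    Function.Surjective (eval₂AlgHom σ t fun _ ↦ Commute.all _ _) := by
  obtain ⟨N, hN⟩ := hn
  suffices happrox : ∀ j w, ∃ p r, w = eval₂ (σ : ResidueField B →+* B) t p + t ^ j * r by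
    intro w
    obtain ⟨p, r, h⟩ := happrox N w
    exact ⟨p, by simp [h, hN]⟩
  intro j
  induction j with
  | zero => exact fun w ↦ ⟨0, w, by simp⟩
  | succ j ih =>
    intro w
    obtain ⟨p, r, hr⟩ := ih w
    have hmem : r - σ (residue B r) ∈ Ideal.span {t} := by
      rw [← ht, ← residue_eq_zero_iff, map_sub, hσ, sub_self]
    obtain ⟨c, hc⟩ := Ideal.mem_span_singleton'.1 hmem
    refine ⟨p + C (residue B r) * X ^ j, c, ?_⟩
    simp only [eval₂_add, eval₂_mul, eval₂_X_pow, eval₂_C, RingHom.coe_coe]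
    linear_combination hr - t ^ j * hc

theorem eval₂_X_mul_derivative_eq_zero (hσ : ∀ x, residue B (σ x) = x) (ht : ¬IsUnit t)
    {p : (ResidueField B)[X]} (hp : eval₂ (σ : ResidueField B →+* B) t p = 0) :
    eval₂ (σ : ResidueField B →+* B) t (X * derivative p) = 0 := by
  rcases eq_or_ne p 0 with rfl | hp0
  · simp
  obtain ⟨q, hpq, hq⟩ := exists_eq_pow_rootMultiplicity_mul_and_not_dvd p hp0 0
  rw [C_0, sub_zero, X_dvd_iff] at hq
  rw [C_0, sub_zero] at hpq
  set j := p.rootMultiplicity 0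
  have hunit : IsUnit (eval₂ (σ : ResidueField B →+* B) t q) := by
    have hid : (residue B).comp (σ : ResidueField B →+* B) = .id _ := RingHom.ext hσ
    rwa [← residue_ne_zero_iff_isUnit, hom_eval₂, (residue_eq_zero_iff t).2 ht, hid, eval₂_id,
      ← coeff_zero_eq_eval_zero]
  have htj : t ^ j = 0 := by
    rwa [hpq, eval₂_mul, eval₂_pow, eval₂_X, hunit.mul_left_eq_zero] at hp
  have hfactor : X * derivative p =
      X ^ j * ((j : (ResidueField B)[X]) * q + X * derivative q) := by
    rw [hpq]
    rcases j with - | j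
    · simp
    · simp only [derivative_mul, derivative_X_pow, Nat.add_sub_cancel, C_eq_natCast]
      ring
  simp [hfactor, eval₂_mul, htj]

/-
`B` is a truncated polynomial ring `κ[t]/(t ^ m)` over its residue field `κ`, because formal
smoothness provides a coefficient field. The derivation is `t ∂/∂t`.
-/
theorem exists_eulerDerivation [Algebra.FormallySmooth k (ResidueField B)]
    (ht : maximalIdeal B = Ideal.span {t}) (hn : IsNilpotent t) :
    ∃ E : Derivation k B B, E t = t ∧ ∀ w, E w ∈ Ideal.span {t} := by
  have hnil : IsNilpotent (maximalIdeal B) := by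
    obtain ⟨N, hN⟩ := hn
    exact ⟨N, by simp [ht, Ideal.span_singleton_pow, hN]⟩
  obtain ⟨σ, hσ⟩ := exists_section_residue_of_isNilpotent (k := k) hnil
  let ev := eval₂AlgHom σ t fun _ ↦ Commute.all _ _
  have hsurj : Function.Surjective ev := eval₂AlgHom_surjective hσ ht hn
  have ht' : ¬IsUnit t := by
    rw [← mem_nonunits_iff, ← mem_maximalIdeal, ht]
    exact Ideal.mem_span_singleton_self t
  let d : Derivation k (ResidueField B)[X] (ResidueField B)[X] :=
    (mkDerivation (ResidueField B) X).restrictScalars k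
  have hd (p) : d p = X * derivative p := by
    simp [d, mkDerivation_apply, mul_comm]
  have hker (p) (hp : ev p = 0) : ev (d p) = 0 := by
    rw [hd]
    exact eval₂_X_mul_derivative_eq_zero hσ ht' hp
  let E := Derivation.liftOfSurjective hsurj hker
  have hE (p) : E (ev p) = ev (X * derivative p) := by
    rw [← hd]
    exact Derivation.liftOfSurjective_apply hsurj hker p
  refine ⟨E, by simpa [ev] using hE X, fun w ↦ ?_⟩
  obtain ⟨p, rfl⟩ := hsurj w
  rw [hE, map_mul, Ideal.mem_span_singleton]
  simp [ev]

theorem exists_eulerDerivation_of_surjective [PerfectField k] {V B : Type*} [CommRing V]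
    [IsLocalRing V] [Algebra k V] [Algebra.EssFiniteType k V] [CommRing B] [Nontrivial B]
    [Algebra k B] {π : V →ₐ[k] B} (hπ : Function.Surjective π) {t : V}
    (ht : maximalIdeal V = Ideal.span {t}) (hn : IsNilpotent (π t)) :
    ∃ E : Derivation k B B, E (π t) = π t ∧ ∀ w, E w ∈ Ideal.span {π t} := by
  have : IsLocalRing B := .of_surjective' (π : V →+* B) hπ
  have : IsLocalHom (π : V →+* B) := hπ.isLocalHom (π : V →+* B)
  have : Algebra.EssFiniteType k B := .of_surjective π hπ
  have : Algebra.EssFiniteType k (ResidueField B) := .comp k B _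
  refine exists_eulerDerivation ?_ hn
  rw [← Ideal.map_comap_of_surjective (π : V →+* B) hπ (maximalIdeal _),
    IsLocalRing.maximalIdeal_comap, ht, Ideal.map_span, Set.image_singleton, RingHom.coe_coe]

theorem eulerDerivation_mul_pow {B : Type*} [CommRing B] [Algebra k B] {t : B} {m : ℕ}
    (ht : t ^ (m + 1) = 0) {E : Derivation k B B} (hE : E t = t)
    (hE' : ∀ w, E w ∈ Ideal.span {t}) (v : B) : E (v * t ^ m) = m * (v * t ^ m) := by
  obtain ⟨c, hc⟩ := Ideal.mem_span_singleton'.1 (hE' v)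
  rw [E.leibniz, E.leibniz_pow, hE, ← hc]
  rcases m with - | m
  · simp_all
  · simp only [smul_eq_mul, nsmul_eq_mul, Nat.add_sub_cancel]
    linear_combination c * ht

end Euler

section IsUnit

variable [CharZero k]

theorem isUnit_of_kaehlerD_mem_of_isDiscreteValuationRing {V : Type*} [CommRing V] [IsDomain V]
    [IsDiscreteValuationRing V] [Algebra k V] [Algebra.EssFiniteType k V] {f : V} (hf : f ≠ 0)
    (hD : KaehlerDifferential.D k V f ∈ Ideal.span {f} • (⊤ : Submodule V Ω[V⁄k])) :
    IsUnit f := by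
  obtain ⟨t, ht⟩ := IsDiscreteValuationRing.exists_irreducible V
  obtain ⟨m, v, rfl⟩ := IsDiscreteValuationRing.eq_unit_mul_pow_irreducible hf ht
  rcases eq_or_ne m 0 with rfl | hm
  · simp
  have : Nontrivial (V ⧸ Ideal.span {t ^ (m + 1)}) := by
    rw [Ideal.Quotient.nontrivial_iff, Ne, Ideal.span_singleton_eq_top,
      isUnit_pow_iff m.succ_ne_zero]
    exact ht.not_isUnit
  let π := Ideal.Quotient.mkₐ k (Ideal.span {t ^ (m + 1)})
  have hπt : π t ^ (m + 1) = 0 := by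
    rw [← map_pow]
    exact Ideal.Quotient.eq_zero_iff_mem.2 (Ideal.mem_span_singleton_self _)
  obtain ⟨E, hEt, hE⟩ := exists_eulerDerivation_of_surjective
    (Ideal.Quotient.mkₐ_surjective k _) ht.maximalIdeal_eq ⟨_, hπt⟩
  have hEuler : E (π (v * t ^ m)) = m * π (v * t ^ m) := by
    simpa using eulerDerivation_mul_pow hπt hEt hE (π v)
  have hzero : E (π (v * t ^ m)) = 0 := by
    have hmem := derivation_apply_mem_mul (kaehlerD_map_mem_smul_top π hD) E hE
    rw [Ideal.map_span, Set.image_singleton, Ideal.span_singleton_mul_span_singleton,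
      Ideal.mem_span_singleton'] at hmem
    obtain ⟨c, hc⟩ := hmem
    rw [← hc]
    simp only [map_mul, map_pow]
    linear_combination c * π v * hπt
  have hm' : IsUnit (m : V) := by
    simpa using (IsUnit.mk0 (m : k) (mod_cast hm)).map (algebraMap k V)
  have hdvd : t ^ (m + 1) ∣ m * (v * t ^ m) := by
    rw [← Ideal.mem_span_singleton, ← Ideal.Quotient.eq_zero_iff_mem]
    change π (m * (v * t ^ m)) = 0
    rw [map_mul, map_natCast, ← hEuler, hzero]
  rw [hm'.dvd_mul_left, v.isUnit.dvd_mul_left, pow_dvd_pow_iff ht.ne_zero ht.not_isUnit] at hdvd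
  lia

variable (k) in
theorem finite_integralClosure_fractionRing (A : Type*) [CommRing A] [IsDomain A] [Algebra k A]
    [Algebra.FiniteType k A] : Module.Finite A (integralClosure A (FractionRing A)) := by
  obtain ⟨s, g, hg, hfin⟩ := exists_finite_inj_algHom_of_fg k A
  let P := MvPolynomial (Fin s) k
  let := g.toRingHom.toAlgebra
  have : Module.Finite P A := hfin
  have : FaithfulSMul P A := (faithfulSMul_iff_algebraMap_injective P A).2 hg
  have : FaithfulSMul P (FractionRing A) := .trans P A _
  let := FractionRing.liftAlgebra P (FractionRing A)
  have : FiniteDimensional (FractionRing P) (FractionRing A) := .of_isLocalization P A P⁰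
  have : CharZero (FractionRing P) :=
    charZero_of_injective_algebraMap (R := P) (IsFractionRing.injective P _)
  have : IsIntegralClosure (integralClosure A (FractionRing A)) P (FractionRing A) :=
    ⟨Subtype.val_injective, fun {x} ↦ ⟨fun hx ↦ ⟨⟨x, hx.tower_top⟩, rfl⟩, fun ⟨y, hy⟩ ↦
      hy ▸ isIntegral_trans (R := P) _ y.2⟩⟩
  have := IsIntegralClosure.finite P (FractionRing P) (FractionRing A)
    (integralClosure A (FractionRing A))
  exact .of_restrictScalars_finite P A _

theorem isDiscreteValuationRing_localization_of_height_le_one {B : Type*} [CommRing B] [IsDomain B]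
    [IsNoetherianRing B] [IsIntegrallyClosed B] {p : Ideal B} [p.IsPrime] (hp : p ≠ ⊥)
    (h : p.height ≤ 1) : IsDiscreteValuationRing (Localization.AtPrime p) := by
  have : IsIntegrallyClosed (Localization.AtPrime p) :=
    isIntegrallyClosed_of_isLocalization _ p.primeCompl p.primeCompl_le_nonZeroDivisors
  have hdim : Ring.KrullDimLE 1 (Localization.AtPrime p) := by
    rw [Ring.krullDimLE_iff, IsLocalization.AtPrime.ringKrullDim_eq_height p]
    exact_mod_cast h
  have : Ring.DimensionLEOne (Localization.AtPrime p) :=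
    ⟨fun hP hP' ↦ Ring.krullDimLE_one_iff_of_isPrime_bot.1 hdim _ hP hP'⟩
  have : IsDedekindDomain (Localization.AtPrime p) := { }
  have hfield := IsLocalization.AtPrime.not_isField B hp (Localization.AtPrime p)
  exact ((IsDiscreteValuationRing.TFAE _ hfield).out 2 0).1 this

theorem isUnit_of_kaehlerD_mem_of_isIntegrallyClosed {B : Type*} [CommRing B] [IsDomain B]
    [IsIntegrallyClosed B] [Algebra k B] [Algebra.FiniteType k B] {f : B} (hf : f ≠ 0)
    (hD : KaehlerDifferential.D k B f ∈ Ideal.span {f} • (⊤ : Submodule B Ω[B⁄k])) :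
    IsUnit f := by
  have : IsNoetherianRing B := Algebra.FiniteType.isNoetherianRing k B
  by_contra hunit
  obtain ⟨p, hp⟩ := Ideal.nonempty_minimalPrimes (I := Ideal.span {f})
    (by rwa [Ne, Ideal.span_singleton_eq_top])
  have := hp.isPrime
  have hfp : f ∈ p := hp.le (Ideal.mem_span_singleton_self f)
  let ψ := IsScalarTower.toAlgHom k B (Localization.AtPrime p)
  have : IsDiscreteValuationRing (Localization.AtPrime p) :=
    isDiscreteValuationRing_localization_of_height_le_one (fun h ↦ hf (by simpa [h] using hfp))
      (Ideal.height_le_one_of_isPrincipal_of_mem_minimalPrimes _ p hp)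
  have hψ : IsUnit (ψ f) := isUnit_of_kaehlerD_mem_of_isDiscreteValuationRing (k := k)
    (by simpa [ψ] using hf)
    (by simpa [Ideal.map_span] using kaehlerD_map_mem_smul_top ψ hD)
  exact (IsLocalization.AtPrime.isUnit_to_map_iff _ p f).1 hψ hfp

theorem isUnit_of_kaehlerD_mem_of_isDomain {A : Type*} [CommRing A] [IsDomain A] [Algebra k A]
    [Algebra.FiniteType k A] {f : A} (hf : f ≠ 0)
    (hD : KaehlerDifferential.D k A f ∈ Ideal.span {f} • (⊤ : Submodule A Ω[A⁄k])) :
    IsUnit f := by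
  have := finite_integralClosure_fractionRing k A
  have : Algebra.FiniteType k (integralClosure A (FractionRing A)) :=
    .trans (S := A) inferInstance inferInstance
  have : IsIntegrallyClosed (integralClosure A (FractionRing A)) :=
    integralClosure.isIntegrallyClosedOfFiniteExtension (FractionRing A)
  let ι := IsScalarTower.toAlgHom k A (integralClosure A (FractionRing A))
  have hι : IsUnit (ι f) := isUnit_of_kaehlerD_mem_of_isIntegrallyClosed (k := k)
    (by simpa [ι] using hf)
    (by simpa [Ideal.map_span] using kaehlerD_map_mem_smul_top ι hD)
  exact isUnit_of_map_unit (algebraMap A (integralClosure A (FractionRing A))) f hι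

theorem isUnit_of_kaehlerD_mem {A : Type*} [CommRing A] [Algebra k A] [Algebra.FiniteType k A]
    {f : A} (hf : f ∈ A⁰)
    (hD : KaehlerDifferential.D k A f ∈ Ideal.span {f} • (⊤ : Submodule A Ω[A⁄k])) :
    IsUnit f := by
  by_contra hunit
  obtain ⟨M, hM, hfM⟩ := exists_max_ideal_of_mem_nonunits hunit
  obtain ⟨p, hp, hpM⟩ := Ideal.exists_minimalPrimes_le (I := (⊥ : Ideal A)) (J := M) bot_le
  have := hp.isPrime
  have hfp : f ∉ p := fun h ↦ notMem_nonZeroDivisors_of_mem_mem_minimalPrimes h hp hf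
  let π := Ideal.Quotient.mkₐ k p
  have hπ : IsUnit (π f) := isUnit_of_kaehlerD_mem_of_isDomain (k := k)
    (hfp ∘ Ideal.Quotient.eq_zero_iff_mem.1)
    (by simpa [Ideal.map_span] using kaehlerD_map_mem_smul_top π hD)
  have hM : IsUnit (Ideal.Quotient.mk M f) := hπ.map (Ideal.Quotient.factor hpM)
  rw [Ideal.Quotient.eq_zero_iff_mem.2 hfM] at hM
  exact not_isUnit_zero hM

end IsUnit

section Blowup

variable {R : Type*} [CommRing R] {I : Ideal R} {f : R}

/-- The affine chart `R[I/f]` of the blow-up of `R` along `I` where `f` generates the pullback of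
`I`, realized as the image of the Rees algebra in `R[1/f]`. -/
noncomputable def blowupChart (I : Ideal R) (f : R) : Subalgebra R (Localization.Away f) :=
  (reesAlgebra I).map (aeval (IsLocalization.Away.invSelf f))

theorem algebraMap_mul_invSelf_mem_blowupChart {i : R} (hi : i ∈ I) :
    algebraMap R (Localization.Away f) i * IsLocalization.Away.invSelf f ∈ blowupChart I f :=
  ⟨monomial 1 i, reesAlgebra.monomial_mem.2 (by simpa), by simp [aeval_monomial]⟩

theorem map_blowupChart_le_span_singleton :
    I.map (algebraMap R (blowupChart I f)) ≤ Ideal.span {algebraMap R (blowupChart I f) f} := by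
  refine Ideal.map_le_iff_le_comap.2 fun i hi ↦ Ideal.mem_span_singleton'.2
    ⟨⟨_, algebraMap_mul_invSelf_mem_blowupChart hi⟩, Subtype.ext ?_⟩
  change algebraMap R (Localization.Away f) i * IsLocalization.Away.invSelf f *
    algebraMap R _ f = algebraMap R _ i
  linear_combination algebraMap R (Localization.Away f) i *
    IsLocalization.Away.mul_invSelf (S := Localization.Away f) f

theorem exists_mem_pow_of_mem_blowupChart (hf : f ∈ I) {a : Localization.Away f}
    (ha : a ∈ blowupChart I f) :
    ∃ d, ∃ i ∈ I ^ d, algebraMap R _ i = algebraMap R _ f ^ d * a := by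
  obtain ⟨p, hp, rfl⟩ := ha
  refine ⟨p.natDegree, ∑ j ∈ Finset.range (p.natDegree + 1), p.coeff j * f ^ (p.natDegree - j),
    sum_mem fun j hj ↦ ?_, ?_⟩
  · rw [← Nat.add_sub_of_le (Finset.mem_range_succ_iff.1 hj), pow_add, Nat.add_sub_cancel_left]
    exact Ideal.mul_mem_mul (hp j) (Ideal.pow_mem_pow hf _)
  simp only [RingHom.coe_coe, aeval_eq_sum_range, map_sum, Finset.mul_sum, Algebra.smul_def,
    map_mul, map_pow]
  refine Finset.sum_congr rfl fun j hj ↦ ?_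
  have hsplit : algebraMap R (Localization.Away f) f ^ p.natDegree =
      algebraMap R _ f ^ (p.natDegree - j) * algebraMap R _ f ^ j := by
    rw [← pow_add, Nat.sub_add_cancel (Finset.mem_range_succ_iff.1 hj)]
  have hinv : algebraMap R (Localization.Away f) f ^ j * IsLocalization.Away.invSelf f ^ j = 1 := by
    rw [← mul_pow, IsLocalization.Away.mul_invSelf, one_pow]
  rw [hsplit]
  linear_combination -(algebraMap R (Localization.Away f) (p.coeff j) *
    algebraMap R _ f ^ (p.natDegree - j)) * hinv

theorem exists_pow_mem_pow_succ_of_isUnit (hf : f ∈ I)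
    (hunit : IsUnit (algebraMap R (blowupChart I f) f)) : ∃ d, f ^ d ∈ I ^ (d + 1) := by
  obtain ⟨a, ha⟩ := hunit.exists_right_inv
  obtain ⟨d, i, hi, hai⟩ := exists_mem_pow_of_mem_blowupChart hf a.2
  have hfd : algebraMap R (Localization.Away f) (f ^ d) = algebraMap R _ (f * i) := by
    have ha' : algebraMap R (Localization.Away f) f * a = 1 := congrArg Subtype.val ha
    simp only [map_pow, map_mul]
    linear_combination -(algebraMap R (Localization.Away f) f) * hai -
      algebraMap R (Localization.Away f) f ^ d * ha'
  obtain ⟨⟨-, e, rfl⟩, he⟩ := (IsLocalization.eq_iff_exists (Submonoid.powers f) _).1 hfd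
  have he' : f ^ (e + d) = f ^ (e + 1) * i := by
    rw [pow_add]
    exact he.trans (by ring)
  refine ⟨e + d, ?_⟩
  rw [he', show e + d + 1 = (e + 1) + d by ring, pow_add I]
  exact Ideal.mul_mem_mul (Ideal.pow_mem_pow hf _) hi

end Blowup

theorem exists_pow_mem_pow_succ_of_kaehlerD_mem [CharZero k] {R : Type*} [CommRing R] [Algebra k R]
    [Algebra.FiniteType k R] {I : Ideal R} {f : R} (hf : f ∈ I)
    (hD : KaehlerDifferential.D k R f ∈ I • (⊤ : Submodule R Ω[R⁄k])) :
    ∃ d, f ^ d ∈ I ^ (d + 1) := by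
  have : IsNoetherianRing R := Algebra.FiniteType.isNoetherianRing k R
  have : Algebra.FiniteType R (blowupChart I f) :=
    (Subalgebra.fg_iff_finiteType _).1 ((reesAlgebra.fg (IsNoetherian.noetherian I)).map _)
  have : Algebra.FiniteType k (blowupChart I f) := .trans (S := R) inferInstance inferInstance
  have hregular : algebraMap R (blowupChart I f) f ∈ (blowupChart I f)⁰ :=
    mem_nonZeroDivisors_of_injective (f := (blowupChart I f).val) Subtype.val_injective
      (IsLocalization.Away.algebraMap_isUnit f).mem_nonZeroDivisors
  exact exists_pow_mem_pow_succ_of_isUnit hf <| isUnit_of_kaehlerD_mem (k := k) hregular <|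
    Submodule.smul_mono_left map_blowupChart_le_span_singleton <|
      kaehlerD_map_mem_smul_top (IsScalarTower.toAlgHom k R (blowupChart I f)) hD

end AlgebraicLojasiewicz

section Lojasiewicz

open Asymptotics Topology

theorem isBigO_rpow_of_pow_isBigO {X : Type*} {f G : X → ℝ} {d : ℕ} (hG : ∀ x, 0 ≤ G x)
    (h : (fun x ↦ f x ^ d) =O[⊤] fun x ↦ (|f x| + G x) ^ (d + 1)) :
    (fun x ↦ |f x| ^ (1 - 1 / (d + 1 : ℝ))) =O[comap f (𝓝 0)] G := by
  obtain ⟨C, hC, hbound⟩ := h.exists_pos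
  rw [isBigOWith_top] at hbound
  set ε : ℝ := 1 / (d + 1)
  have hε : 0 < ε := by positivity
  have hε1 : ε ≤ 1 := (div_le_one (by positivity)).2 (by simp)
  have hroot (x) : |f x| ^ (1 - ε) ≤ C ^ ε * (|f x| + G x) := by
    have hG := hG x
    have hx := hbound x
    rw [norm_pow, norm_pow, Real.norm_eq_abs, Real.norm_of_nonneg (by positivity)] at hx
    calc |f x| ^ (1 - ε) = (|f x| ^ d) ^ ε := by
          rw [← Real.rpow_natCast_mul (abs_nonneg _)]
          congr 1
          simp only [ε]
          field_simp
          ring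
      _ ≤ (C * (|f x| + G x) ^ (d + 1)) ^ ε := by gcongr
      _ = C ^ ε * (|f x| + G x) := by
          rw [Real.mul_rpow hC.le (by positivity), ← Real.rpow_natCast_mul (by positivity)]
          simp [ε, mul_inv_cancel₀ (show (d + 1 : ℝ) ≠ 0 by positivity)]
  have hsmall : ∀ᶠ x in comap f (𝓝 0), C ^ ε * |f x| ^ ε < 1 / 2 := by
    have hcont : ContinuousAt (fun y : ℝ ↦ C ^ ε * |y| ^ ε) 0 := by
      fun_prop (disch := simp [hε.le])
    have hlim : Tendsto (fun y : ℝ ↦ C ^ ε * |y| ^ ε) (𝓝 0) (𝓝 0) := by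
      simpa [ContinuousAt, Real.zero_rpow hε.ne'] using hcont
    exact (hlim.comp tendsto_comap).eventually (gt_mem_nhds (by norm_num))
  refine .of_bound (2 * C ^ ε) (hsmall.mono fun x hx ↦ ?_)
  rw [Real.norm_of_nonneg (by positivity), Real.norm_of_nonneg (hG x)]
  have habsorb : C ^ ε * |f x| ≤ 1 / 2 * |f x| ^ (1 - ε) := by
    calc C ^ ε * |f x| = C ^ ε * |f x| ^ ε * |f x| ^ (1 - ε) := by
          rw [mul_assoc, ← Real.rpow_add_of_nonneg (abs_nonneg _) hε.le (sub_nonneg.2 hε1),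
            add_sub_cancel, Real.rpow_one]
      _ ≤ 1 / 2 * |f x| ^ (1 - ε) := by gcongr
  linarith [hroot x, mul_add (C ^ ε) |f x| (G x)]

variable {X R : Type*} [TopologicalSpace X] [CompactSpace X] [CommRing R] [Algebra ℝ R]
  (φ : R →ₐ[ℝ] C(X, ℝ))

theorem isBigO_of_mem_span {s : Set R} {G : X → ℝ} (hs : ∀ r ∈ s, φ r =O[⊤] G) {r : R}
    (hr : r ∈ Ideal.span s) : φ r =O[⊤] G := by
  induction hr using Submodule.span_induction with
  | mem r hr => exact hs r hr
  | zero => exact (isBigO_zero (E' := ℝ) G ⊤).congr_left fun x ↦ by simp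
  | add a b _ _ ha hb => simpa using ha.add hb
  | smul c a _ ha =>
    have hc : φ c =O[⊤] fun _ ↦ (1 : ℝ) :=
      .of_bound ‖φ c‖ (by simpa using (φ c).norm_coe_le_norm)
    simpa using! hc.mul ha

theorem isBigO_pow_of_mem_pow {I : Ideal R} {G : X → ℝ} (hI : ∀ r ∈ I, φ r =O[⊤] G) {m : ℕ} {r : R}
    (hr : r ∈ I ^ m) : φ r =O[⊤] fun x ↦ G x ^ m := by
  induction m generalizing r with
  | zero =>
    have h1 : φ 1 =O[⊤] fun x ↦ G x ^ 0 := by simpa using! isBigO_refl (fun _ : X ↦ (1 : ℝ)) ⊤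
    exact isBigO_of_mem_span φ (s := {1}) (by simpa using h1) (by simp)
  | succ m ih =>
    rw [pow_succ] at hr
    induction hr using Submodule.mul_induction_on' with
    | mem_mul_mem a ha b hb => simpa [pow_succ] using! (ih ha).mul (hI b hb)
    | add a _ b _ ha hb => simpa using ha.add hb

theorem exists_isBigO_rpow_of_kaehlerD_mem [Algebra.FiniteType ℝ R] {κ : Type*} [Fintype κ]
    {f : R} {g : κ → R}
    (h : KaehlerDifferential.D ℝ R f ∈ Ideal.span (Set.range g) • (⊤ : Submodule R Ω[R⁄ℝ])) :
    ∃ ε ∈ Set.Ioc (0 : ℝ) 1,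
      (fun x ↦ |φ f x| ^ (1 - ε)) =O[comap (φ f) (𝓝 0)] fun x ↦ ∑ i, |φ (g i) x| := by
  let I := Ideal.span (insert f (Set.range g))
  obtain ⟨d, hd⟩ : ∃ d, f ^ d ∈ I ^ (d + 1) := by
    refine exists_pow_mem_pow_succ_of_kaehlerD_mem (k := ℝ)
      (Ideal.subset_span (Set.mem_insert _ _)) ?_
    exact Submodule.smul_mono_left (Ideal.span_mono (Set.subset_insert _ _)) h
  have hgen : ∀ r ∈ insert f (Set.range g), φ r =O[⊤] fun x ↦ |φ f x| + ∑ i, |φ (g i) x| := by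
    refine fun r hr ↦ .of_norm_le fun x ↦ ?_
    rcases hr with rfl | ⟨i, rfl⟩
    · exact le_add_of_nonneg_right (by positivity)
    · exact (Finset.single_le_sum (f := fun i ↦ |φ (g i) x|) (fun _ _ ↦ abs_nonneg _)
        (Finset.mem_univ i)).trans (le_add_of_nonneg_left (abs_nonneg _))
  have hpow := isBigO_pow_of_mem_pow φ (fun _ ↦ isBigO_of_mem_span φ hgen) hd
  refine ⟨1 / (d + 1), ⟨by positivity, (div_le_one (by positivity)).2 (by simp)⟩, ?_⟩
  exact isBigO_rpow_of_pow_isBigO (fun x ↦ by positivity) (by simpa using! hpow)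

end Lojasiewicz

section JointDiagonalization

variable {ι n R : Type*} [CommRing R]

/-- The simultaneous congruence `A ℓ ↦ Qᵀ A ℓ Q` of a family of matrices. -/
def congruence [Fintype n] (A : ι → Matrix n n R) (Q : Matrix n n R) (ℓ : ι) : Matrix n n R :=
  Qᵀ * A ℓ * Q

/-- The total diagonal energy of a family of matrices; joint approximate diagonalization of `A`
maximizes `Q ↦ diagEnergy (congruence A Q)` over the orthogonal group. -/
def diagEnergy [Fintype ι] [Fintype n] (B : ι → Matrix n n R) : R := ∑ ℓ, ∑ k, B ℓ k k ^ 2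

/-- Half the derivative of `diagEnergy` under rotation in the coordinate plane `(i, j)`.
Symmetrizing `B ℓ i j` makes the definition meaningful for nonsymmetric `B ℓ`. -/
def diagCoupling [Fintype ι] (B : ι → Matrix n n R) (i j : n) : R :=
  ∑ ℓ, (B ℓ i i - B ℓ j j) * (B ℓ i j + B ℓ j i)

theorem congruence_mul [Fintype n] (A : ι → Matrix n n R) (Q P : Matrix n n R) :
    congruence A (Q * P) = congruence (congruence A Q) P := by
  ext1 ℓ
  simp only [congruence, transpose_mul, Matrix.mul_assoc]

section map

variable {S : Type*} [CommRing S] (φ : R →+* S)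

theorem map_congruence [Fintype n] (A : ι → Matrix n n R) (Q : Matrix n n R) :
    (fun ℓ ↦ (congruence A Q ℓ).map φ) = congruence (fun ℓ ↦ (A ℓ).map φ) (Q.map φ) :=
  funext fun ℓ ↦ by simp only [congruence, Matrix.map_mul, transpose_map]

theorem map_diagEnergy_congruence [Fintype ι] [Fintype n] (A : ι → Matrix n n R)
    (Q : Matrix n n R) : φ (diagEnergy (congruence A Q)) =
      diagEnergy (congruence (fun ℓ ↦ (A ℓ).map φ) (Q.map φ)) := by
  simp [← map_congruence, diagEnergy]

theorem map_diagCoupling_congruence [Fintype ι] [Fintype n] (A : ι → Matrix n n R)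
    (Q : Matrix n n R) (i j : n) : φ (diagCoupling (congruence A Q) i j) =
      diagCoupling (congruence (fun ℓ ↦ (A ℓ).map φ) (Q.map φ)) i j := by
  simp [← map_congruence, diagCoupling]

end map

section Derivation

variable [Fintype n] {S M : Type*} [CommRing S] [Algebra S R] [AddCommGroup M] [Module R M]
  [Module S M]

theorem sum_smul_sum_smul_of_antisymm [Fintype ι] (B : ι → Matrix n n R) {W : n → n → M}
    (hW : ∀ j k, W j k = -W k j) :
    ∑ ℓ, ∑ k, (2 * B ℓ k k) • ∑ j, (B ℓ k j + B ℓ j k) • W j k =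
      ∑ k, ∑ j, diagCoupling B k j • W j k := by
  have hswap (ℓ) : ∑ k, ∑ j, (B ℓ k k * (B ℓ k j + B ℓ j k)) • W j k =
      -∑ k, ∑ j, (B ℓ j j * (B ℓ k j + B ℓ j k)) • W j k := by
    rw [Finset.sum_comm]
    simp only [← Finset.sum_neg_distrib]
    refine Finset.sum_congr rfl fun k _ ↦ Finset.sum_congr rfl fun j _ ↦ ?_
    rw [hW k j, smul_neg, add_comm (B ℓ j k)]
  calc ∑ ℓ, ∑ k, (2 * B ℓ k k) • ∑ j, (B ℓ k j + B ℓ j k) • W j k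
      = ∑ ℓ, (∑ k, ∑ j, (B ℓ k k * (B ℓ k j + B ℓ j k)) • W j k +
          ∑ k, ∑ j, (B ℓ k k * (B ℓ k j + B ℓ j k)) • W j k) := by
        simp only [Finset.smul_sum, smul_smul, mul_assoc]
        simp only [two_mul, add_smul, Finset.sum_add_distrib]
    _ = ∑ ℓ, ∑ k, ∑ j, ((B ℓ k k - B ℓ j j) * (B ℓ k j + B ℓ j k)) • W j k := by
        refine Finset.sum_congr rfl fun ℓ _ ↦ ?_
        nth_rw 2 [hswap]
        rw [← sub_eq_add_neg]
        simp only [sub_mul, sub_smul, Finset.sum_sub_distrib]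
    _ = ∑ k, ∑ j, diagCoupling B k j • W j k := by
        simp only [diagCoupling, Finset.sum_smul]
        rw [Finset.sum_comm]
        exact Finset.sum_congr rfl fun k _ ↦ Finset.sum_comm

/-- The pullback `Uᵀ dU` of the Maurer–Cartan form of the orthogonal group, with the universal
differential replaced by an arbitrary derivation. -/
def maurerCartan (D : Derivation S R M) (U : Matrix n n R) (j k : n) : M :=
  ∑ a, U a j • D (U a k)

variable [DecidableEq n] (D : Derivation S R M) {U : Matrix n n R} (hU : Uᵀ * U = 1)

include hU

theorem maurerCartan_antisymm (j k : n) : maurerCartan D U j k = -maurerCartan D U k j := by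
  have h : D ((Uᵀ * U) j k) = 0 := by
    rw [hU, one_apply]
    split_ifs <;> simp
  rw [eq_neg_iff_add_eq_zero, ← h]
  simp [maurerCartan, mul_apply, Finset.sum_add_distrib]

theorem sum_smul_derivation_apply (c : n → R) (k : n) :
    ∑ a, c a • D (U a k) = ∑ j, (c ᵥ* U) j • maurerCartan D U j k := by
  have hc (a) : c a = ∑ j, (c ᵥ* U) j * U a j := by
    have : c = (c ᵥ* U) ᵥ* Uᵀ := by rw [vecMul_vecMul, mul_eq_one_comm.1 hU, vecMul_one]
    exact congrFun this a
  simp only [maurerCartan, Finset.smul_sum, smul_smul]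
  rw [Finset.sum_comm]
  refine Finset.sum_congr rfl fun a _ ↦ ?_
  rw [← Finset.sum_smul, ← hc]

variable {A : ι → Matrix n n R} (hA : ∀ ℓ a b, D (A ℓ a b) = 0)

include hA

theorem derivation_congruence_apply_self (ℓ : ι) (k : n) :
    D (congruence A U ℓ k k) =
      ∑ j, (congruence A U ℓ k j + congruence A U ℓ j k) • maurerCartan D U j k := by
  have hleft : ∑ a, (Uᵀ * A ℓ) k a • D (U a k) =
      ∑ j, congruence A U ℓ k j • maurerCartan D U j k :=
    sum_smul_derivation_apply D hU ((Uᵀ * A ℓ) k) k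
  have hright : ∑ a, (A ℓ * U) a k • D (U a k) =
      ∑ j, congruence A U ℓ j k • maurerCartan D U j k := by
    rw [sum_smul_derivation_apply D hU fun a ↦ (A ℓ * U) a k]
    simp only [congruence, Matrix.mul_assoc]
    simp [mul_apply, vecMul, dotProduct, mul_comm]
  have hleibniz : D (congruence A U ℓ k k) =
      ∑ a, (Uᵀ * A ℓ) k a • D (U a k) + ∑ a, (A ℓ * U) a k • D (U a k) := by
    have hD (b) : D ((Uᵀ * A ℓ) k b) = ∑ a, A ℓ a b • D (U a k) := by
      simp [mul_apply, hA]
    simp only [congruence, mul_apply (M := Uᵀ * A ℓ), map_sum, Derivation.leibniz, hD,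
      Finset.sum_add_distrib, add_right_inj]
    simp only [mul_apply, Finset.smul_sum, Finset.sum_smul, smul_smul, mul_comm]
    exact Finset.sum_comm
  simp only [hleibniz, hleft, hright, add_smul, Finset.sum_add_distrib]

theorem derivation_diagEnergy_congruence [Fintype ι] :
    D (diagEnergy (congruence A U)) =
      ∑ k, ∑ j, diagCoupling (congruence A U) k j • maurerCartan D U j k := by
  rw [← sum_smul_sum_smul_of_antisymm _ (maurerCartan_antisymm D hU)]
  simp only [← derivation_congruence_apply_self D hU hA, diagEnergy, map_sum,
    Derivation.leibniz_pow]
  simp [two_nsmul, two_mul, add_smul]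

end Derivation

theorem kaehlerD_diagEnergy_congruence_sub_mem [Fintype ι] [Fintype n] [DecidableEq n] {S : Type*}
    [CommRing S] [Algebra S R] {U : Matrix n n R} (hU : Uᵀ * U = 1) (A : ι → Matrix n n S)
    (c : S) :
    KaehlerDifferential.D S R
        (diagEnergy (congruence (fun ℓ ↦ (A ℓ).map (algebraMap S R)) U) - algebraMap S R c) ∈
      Ideal.span (Set.range fun p : n × n ↦
        diagCoupling (congruence (fun ℓ ↦ (A ℓ).map (algebraMap S R)) U) p.1 p.2) •
          (⊤ : Submodule R Ω[R⁄S]) := by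
  rw [map_sub, Derivation.map_algebraMap, sub_zero,
    derivation_diagEnergy_congruence _ hU (A := fun ℓ ↦ (A ℓ).map (algebraMap S R)) fun ℓ a b ↦
      Derivation.map_algebraMap _ (A ℓ a b)]
  exact sum_mem fun a _ ↦ sum_mem fun b _ ↦
    Submodule.smul_mem_smul (Ideal.subset_span ⟨(a, b), rfl⟩) trivial

section OrthogonalGroup

open Asymptotics Topology

variable [Fintype n] [DecidableEq n]

theorem abs_apply_le_one_of_mem_orthogonalGroup {Q : Matrix n n ℝ} (hQ : Q ∈ orthogonalGroup n ℝ)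
    (a b : n) : |Q a b| ≤ 1 :=
  entry_norm_bound_of_unitary hQ a b

variable (n) in
theorem isCompact_orthogonalGroup : IsCompact (orthogonalGroup n ℝ : Set (Matrix n n ℝ)) := by
  have hclosed : IsClosed (orthogonalGroup n ℝ : Set (Matrix n n ℝ)) := isClosed_unitary
  have hbox : IsCompact (Set.univ.pi fun _ : n ↦ Set.univ.pi fun _ : n ↦ Set.Icc (-1 : ℝ) 1) :=
    isCompact_univ_pi fun _ ↦ isCompact_univ_pi fun _ ↦ isCompact_Icc
  exact hbox.of_isClosed_subset hclosed fun Q hQ a _ b _ ↦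
    abs_le.1 (abs_apply_le_one_of_mem_orthogonalGroup hQ a b)

instance : CompactSpace (orthogonalGroup n ℝ) :=
  isCompact_iff_compactSpace.1 (isCompact_orthogonalGroup n)

variable [Fintype ι]

theorem exists_isBigO_rpow_diagEnergy_sub (A : ι → Matrix n n ℝ) (c : ℝ) :
    ∃ ε ∈ Set.Ioc (0 : ℝ) 1,
      (fun Q : orthogonalGroup n ℝ ↦ |diagEnergy (congruence A Q) - c| ^ (1 - ε))
        =O[comap (fun Q : orthogonalGroup n ℝ ↦ diagEnergy (congruence A Q) - c) (𝓝 0)]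
          fun Q ↦ ∑ p : n × n, |diagCoupling (congruence A Q) p.1 p.2| := by
  let entry (p : n × n) : C(orthogonalGroup n ℝ, ℝ) :=
    ⟨fun Q ↦ (Q : Matrix n n ℝ) p.1 p.2, continuous_subtype_val.matrix_elem p.1 p.2⟩
  let R := Algebra.adjoin ℝ (Set.range entry)
  have : Algebra.FiniteType ℝ R := .adjoin_of_finite (Set.finite_range entry)
  let U : Matrix n n R := .of fun a b ↦ ⟨entry (a, b), Algebra.subset_adjoin ⟨_, rfl⟩⟩
  let A' (ℓ : ι) : Matrix n n R := (A ℓ).map (algebraMap ℝ R)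
  let ev (Q : orthogonalGroup n ℝ) : R →ₐ[ℝ] ℝ :=
    (ContinuousMap.evalAlgHom ℝ ℝ Q).comp R.val
  have hA (Q ℓ) : (A' ℓ).map (ev Q : R →+* ℝ) = A ℓ := by
    ext a b
    exact (ev Q).commutes (A ℓ a b)
  have hevU (Q : orthogonalGroup n ℝ) : U.map (ev Q : R →+* ℝ) = Q := rfl
  have hU : Uᵀ * U = 1 := by
    ext a b Q
    have hQ : (Uᵀ * U).map (ev Q : R →+* ℝ) = (1 : Matrix n n R).map (ev Q : R →+* ℝ) := by
      rw [Matrix.map_mul, transpose_map, hevU, Matrix.map_one _ (map_zero _) (map_one _)]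
      exact (mem_orthogonalGroup_iff' n ℝ).1 Q.2
    exact congrFun₂ hQ a b
  have henergy : ⇑(R.val (diagEnergy (congruence A' U) - algebraMap ℝ R c)) =
      fun Q : orthogonalGroup n ℝ ↦ diagEnergy (congruence A Q) - c := funext fun Q ↦ by
    have := map_diagEnergy_congruence (ev Q : R →+* ℝ) A' U
    simp only [hA, hevU] at this
    exact congrArg (· - c) this
  have hcoupling (Q) (p : n × n) : R.val (diagCoupling (congruence A' U) p.1 p.2) Q =
      diagCoupling (congruence A Q) p.1 p.2 := by
    have := map_diagCoupling_congruence (ev Q : R →+* ℝ) A' U p.1 p.2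
    simp only [hA, hevU] at this
    exact this
  obtain ⟨ε, hε, hO⟩ := exists_isBigO_rpow_of_kaehlerD_mem R.val
    (f := diagEnergy (congruence A' U) - algebraMap ℝ R c)
    (g := fun p : n × n ↦ diagCoupling (congruence A' U) p.1 p.2)
    (kaehlerD_diagEnergy_congruence_sub_mem hU A c)
  refine ⟨ε, hε, ?_⟩
  simp only [henergy, hcoupling] at hO
  exact hO

end OrthogonalGroup

end JointDiagonalization

section Descent

theorem mul_sub_le_rpow_sub_rpow_mul_rpow {ε x y : ℝ} (hε : ε ∈ Set.Ioc (0 : ℝ) 1) (hx : 0 < x)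
    (hy : 0 ≤ y) : ε * (x - y) ≤ (x ^ ε - y ^ ε) * x ^ (1 - ε) := by
  have hconcave : (y / x) ^ ε ≤ 1 + ε * (y / x - 1) := by
    have h := rpow_one_add_le_one_add_mul_self (s := y / x - 1)
      (by linarith [div_nonneg hy hx.le]) hε.1.le hε.2
    rwa [add_sub_cancel] at h
  have hsplit : x ^ ε * x ^ (1 - ε) = x := by
    rw [← Real.rpow_add hx, add_sub_cancel, Real.rpow_one]
  calc ε * (x - y) = x - (1 + ε * (y / x - 1)) * x := by field_simp; ring
    _ ≤ x - (y / x) ^ ε * x := by gcongr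
    _ = (x ^ ε - y ^ ε) * x ^ (1 - ε) := by
        rw [Real.div_rpow hy hx.le, sub_mul, hsplit]
        nth_rw 3 [← hsplit]
        field_simp

theorem summable_of_eventually_le_sub_succ {s u : ℕ → ℝ} (hs : ∀ k, 0 ≤ s k) (hu : ∀ k, 0 ≤ u k)
    (h : ∀ᶠ k in atTop, s k ≤ u k - u (k + 1)) : Summable s := by
  obtain ⟨N, hN⟩ := eventually_atTop.1 h
  rw [← summable_nat_add_iff N]
  refine summable_of_sum_range_le (c := u N) (fun k ↦ hs _) fun m ↦ ?_
  calc ∑ k ∈ Finset.range m, s (k + N)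
      ≤ ∑ k ∈ Finset.range m, (u (k + N) - u (k + 1 + N)) := by
        gcongr with k
        simpa only [add_right_comm] using hN (k + N) (Nat.le_add_left N k)
    _ = u N - u (m + N) := by rw [Finset.sum_range_sub' fun k ↦ u (k + N), zero_add]
    _ ≤ u N := sub_le_self _ (hu _)

theorem summable_of_rpow_isBigO {ε : ℝ} (hε : ε ∈ Set.Ioc (0 : ℝ) 1) {e b s : ℕ → ℝ}
    (he : ∀ k, 0 ≤ e k) (hs : ∀ k, 0 ≤ s k) (hdescent : ∀ k, |b k| * s k ≤ e k - e (k + 1))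
    (hstall : ∀ k, e (k + 1) = e k → s k = 0)
    (hgrad : (fun k ↦ e k ^ (1 - ε)) =O[atTop] b) : Summable s := by
  obtain ⟨C, hC, hbound⟩ := hgrad.exists_pos
  refine summable_of_eventually_le_sub_succ (u := fun k ↦ C / ε * e k ^ ε) hs
    (fun k ↦ mul_nonneg (div_pos hC hε.1).le (Real.rpow_nonneg (he k) _))
    (hbound.bound.mono fun k hk ↦ ?_)
  rw [Real.norm_of_nonneg (Real.rpow_nonneg (he k) _), Real.norm_eq_abs] at hk
  rcases (he k).eq_or_lt with hek | hek
  · have hsucc : e (k + 1) = e k := by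
      linarith [he (k + 1), hdescent k, mul_nonneg (abs_nonneg (b k)) (hs k)]
    simp [hstall k hsucc, hsucc]
  · have hpow : 0 < e k ^ (1 - ε) := Real.rpow_pos_of_pos hek _
    have hstep : ε * (s k * e k ^ (1 - ε)) ≤ C * (e k ^ ε - e (k + 1) ^ ε) * e k ^ (1 - ε) :=
      calc ε * (s k * e k ^ (1 - ε)) ≤ ε * (s k * (C * |b k|)) := by
            gcongr
            exacts [hε.1.le, hs k]
        _ = C * (ε * (|b k| * s k)) := by ring
        _ ≤ C * (ε * (e k - e (k + 1))) := by
            gcongr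
            exacts [hε.1.le, hdescent k]
        _ ≤ C * ((e k ^ ε - e (k + 1) ^ ε) * e k ^ (1 - ε)) :=
            mul_le_mul_of_nonneg_left (mul_sub_le_rpow_sub_rpow_mul_rpow hε hek (he _)) hC.le
        _ = C * (e k ^ ε - e (k + 1) ^ ε) * e k ^ (1 - ε) := by ring
    rw [← mul_assoc] at hstep
    have hdiv : s k ≤ C * (e k ^ ε - e (k + 1) ^ ε) / ε :=
      (le_div_iff₀' hε.1).2 (le_of_mul_le_mul_right hstep hpow)
    calc s k ≤ C * (e k ^ ε - e (k + 1) ^ ε) / ε := hdiv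
      _ = C / ε * e k ^ ε - C / ε * e (k + 1) ^ ε := by ring

end Descent

section LineSearch

open Real

/-- `θ` is a global maximizer of `h` of smallest absolute value among the global maximizers: the
angle selected by an exact line search of the Jacobi-G algorithm. -/
def IsSmallestMaximizer (h : ℝ → ℝ) (θ : ℝ) : Prop :=
  (∀ t, h t ≤ h θ) ∧ ∀ t, (∀ s, h s ≤ h t) → |θ| ≤ |t|

theorem abs_sin_mul_abs_le {x : ℝ} (hx : |x| ≤ π) : |sin x| * |x| ≤ π * (1 - cos x) := by
  have hjordan : 2 / π * |x / 2| ≤ |sin (x / 2)| :=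
    mul_abs_le_abs_sin (by rw [abs_div, abs_two]; linarith)
  have hx' : |x| ≤ π * |sin (x / 2)| := by
    rw [abs_div, abs_two] at hjordan
    calc |x| = π * (2 / π * (|x| / 2)) := by field_simp
      _ ≤ π * |sin (x / 2)| := by gcongr
  have hdouble : x = 2 * (x / 2) := by ring
  have hsin : |sin x| ≤ 2 * |sin (x / 2)| := by
    rw [hdouble, sin_two_mul, abs_mul, abs_mul, abs_two, ← hdouble]
    exact mul_le_of_le_one_right (by positivity) (abs_cos_le_one _)
  have hcos : 1 - cos x = 2 * |sin (x / 2)| ^ 2 := by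
    rw [sq_abs, sin_sq_eq_half_sub, ← hdouble]
    ring
  calc |sin x| * |x| ≤ 2 * |sin (x / 2)| * (π * |sin (x / 2)|) := by gcongr
    _ = π * (1 - cos x) := by rw [hcos]; ring

theorem exists_amplitude_of_forall_le {α β x : ℝ}
    (hmax : ∀ y, α * cos y + β * sin y ≤ α * cos x + β * sin x) :
    ∃ V, 0 ≤ V ∧ α = V * cos x ∧ β = V * sin x := by
  have hcrit : α * -sin x + β * cos x = 0 :=
    IsLocalMax.hasDerivAt_eq_zero (.of_forall hmax)
      (((hasDerivAt_cos x).const_mul α).add ((hasDerivAt_sin x).const_mul β))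
  have hnonneg := hmax (x + π)
  rw [cos_add_pi, sin_add_pi] at hnonneg
  refine ⟨α * cos x + β * sin x, by linarith, ?_, ?_⟩
  · linear_combination -α * sin_sq_add_cos_sq x - sin x * hcrit
  · linear_combination -β * sin_sq_add_cos_sq x + cos x * hcrit

namespace IsSmallestMaximizer

variable {h : ℝ → ℝ} {θ c α β : ℝ}

theorem eq_zero_of_apply_eq (hθ : IsSmallestMaximizer h θ) (h0 : h θ = h 0) : θ = 0 := by
  simpa using hθ.2 0 (h0 ▸ hθ.1)

theorem abs_le_half_of_periodic (hθ : IsSmallestMaximizer h θ) {T : ℝ} (hT : 0 < T)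
    (hper : h.Periodic T) : |θ| ≤ T / 2 := by
  have hmax : ∀ s, h s ≤ h (θ - round (θ / T) * T) := by
    rw [hper.sub_int_mul_eq]
    exact hθ.1
  calc |θ| ≤ |θ - round (θ / T) * T| := hθ.2 _ hmax
    _ = |θ / T - round (θ / T)| * T := by
        rw [← abs_of_pos hT, ← abs_mul, abs_of_pos hT, sub_mul, div_mul_cancel₀ _ hT.ne']
    _ ≤ 1 / 2 * T := by gcongr; exact abs_sub_round _
    _ = T / 2 := by ring

theorem exists_amplitude (hθ : IsSmallestMaximizer h θ)
    (hh : ∀ t, h t = c + α * cos (4 * t) + β * sin (4 * t)) :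
    ∃ V, 0 ≤ V ∧ α = V * cos (4 * θ) ∧ β = V * sin (4 * θ) := by
  refine exists_amplitude_of_forall_le fun y ↦ ?_
  have hy := hθ.1 (y / 4)
  rw [hh, hh, mul_div_cancel₀ y four_ne_zero] at hy
  linarith

theorem abs_mul_abs_le (hθ : IsSmallestMaximizer h θ)
    (hh : ∀ t, h t = c + α * cos (4 * t) + β * sin (4 * t)) : |β| * |θ| ≤ h θ - h 0 := by
  obtain ⟨V, hV, hα, hβ⟩ := hθ.exists_amplitude hh
  have hper : h.Periodic (π / 2) := fun t ↦ by
    rw [hh, hh, show 4 * (t + π / 2) = 4 * t + 2 * π by ring, cos_add_two_pi, sin_add_two_pi]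
  have h4θ : |4 * θ| ≤ π := by
    have := hθ.abs_le_half_of_periodic (by positivity) hper
    rw [abs_mul, abs_of_pos four_pos]
    linarith
  have hgain : h θ - h 0 = V * (1 - cos (4 * θ)) := by
    rw [hh, hh, hα, hβ]
    simp only [mul_zero, cos_zero, sin_zero]
    linear_combination V * sin_sq_add_cos_sq (4 * θ)
  have hcos : 0 ≤ V * (1 - cos (4 * θ)) := mul_nonneg hV (sub_nonneg.2 (cos_le_one _))
  calc |β| * |θ| = V * (|sin (4 * θ)| * |4 * θ|) / 4 := by
        rw [hβ, abs_mul V, abs_mul 4, abs_of_nonneg hV, abs_of_pos (four_pos (α := ℝ))]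
        ring
    _ ≤ V * (π * (1 - cos (4 * θ))) / 4 := by
        gcongr V * ?_ / 4
        exact abs_sin_mul_abs_le h4θ
    _ = V * (1 - cos (4 * θ)) * (π / 4) := by ring
    _ ≤ V * (1 - cos (4 * θ)) :=
        mul_le_of_le_one_right hcos ((div_le_one four_pos).2 pi_le_four)
    _ = h θ - h 0 := hgain.symm

theorem abs_le_mul_abs (hθ : IsSmallestMaximizer h θ)
    (hh : ∀ t, h t = c + α * cos (4 * t) + β * sin (4 * t)) (hnonneg : ∀ t, 0 ≤ h t) :
    |β| ≤ 2 * h θ * |θ| := by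
  obtain ⟨V, hV, hα, hβ⟩ := hθ.exists_amplitude hh
  have hamplitude : 2 * V ≤ h θ := by
    have hanti := hnonneg (θ + π / 4)
    rw [hh, show 4 * (θ + π / 4) = 4 * θ + π by ring, cos_add_pi, sin_add_pi, hα, hβ] at hanti
    rw [hh, hα, hβ]
    linarith [congrArg (V * ·) (sin_sq_add_cos_sq (4 * θ))]
  calc |β| = V * |sin (4 * θ)| := by rw [hβ, abs_mul, abs_of_nonneg hV]
    _ ≤ V * |4 * θ| := by gcongr V * ?_; exact abs_sin_le_abs
    _ = 2 * (2 * V) * |θ| := by rw [abs_mul, abs_of_pos four_pos]; ring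
    _ ≤ 2 * h θ * |θ| := by gcongr

end IsSmallestMaximizer

end LineSearch

section Givens

open Real

variable {ι : Type*} {n : ℕ} {i j : Fin n}

theorem mul_givensR_apply_left (hij : i ≠ j) (M : Matrix (Fin n) (Fin n) ℝ) (t : ℝ) (a : Fin n) :
    (M * givensR n i j t) a i = cos t * M a i + sin t * M a j := by
  rw [mul_apply, Finset.sum_eq_add i j hij]
  · simp [givensR, hij, hij.symm, mul_comm]
  · rintro c - ⟨hci, hcj⟩
    simp [givensR, hij, hci, hcj]
  · simp
  · simp

theorem mul_givensR_apply_right (hij : i ≠ j) (M : Matrix (Fin n) (Fin n) ℝ) (t : ℝ) (a : Fin n) :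
    (M * givensR n i j t) a j = -sin t * M a i + cos t * M a j := by
  rw [mul_apply, Finset.sum_eq_add i j hij]
  · simp [givensR, hij, hij.symm, mul_comm]
  · rintro c - ⟨hci, hcj⟩
    simp [givensR, hij.symm, hci, hcj]
  · simp
  · simp

theorem mul_givensR_apply_of_ne (M : Matrix (Fin n) (Fin n) ℝ) (t : ℝ) (a : Fin n) {b : Fin n}
    (hbi : b ≠ i) (hbj : b ≠ j) : (M * givensR n i j t) a b = M a b := by
  rw [mul_apply, Finset.sum_eq_single b]
  · simp [givensR, hbi, hbj]
  · rintro c - hcb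
    simp [givensR, hbi, hbj, hcb]
  · simp

theorem givensR_zero : givensR n i j 0 = 1 := by
  ext a b
  simp only [givensR, one_apply, cos_zero, sin_zero, neg_zero]
  grind

theorem givensR_mem_orthogonalGroup (hij : i ≠ j) (t : ℝ) :
    givensR n i j t ∈ orthogonalGroup (Fin n) ℝ := by
  rw [mem_orthogonalGroup_iff']
  ext a b
  rcases eq_or_ne b i with rfl | hbi
  · rw [mul_givensR_apply_left hij]
    simp only [givensR, transpose_apply, one_apply]
    grind [sin_sq_add_cos_sq t]
  rcases eq_or_ne b j with rfl | hbj
  · rw [mul_givensR_apply_right hij]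
    simp only [givensR, transpose_apply, one_apply]
    grind [sin_sq_add_cos_sq t]
  · rw [mul_givensR_apply_of_ne _ _ _ hbi hbj]
    simp only [givensR, transpose_apply, one_apply]
    grind

theorem abs_mul_givensR_sub_le (hij : i ≠ j) (t : ℝ) {Q : Matrix (Fin n) (Fin n) ℝ}
    (hQ : Q ∈ orthogonalGroup (Fin n) ℝ) (a b : Fin n) :
    |(Q * givensR n i j t) a b - Q a b| ≤ 2 * |t| := by
  have hsin : |sin t| ≤ |t| := abs_sin_le_abs
  have hcos : |cos t - 1| ≤ |t| := by simpa using abs_cos_sub_cos_le t 0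
  have hentries {u v : ℝ} (hu : |u| ≤ |t|) (hv : |v| ≤ |t|) (c d : Fin n) :
      |u * Q a c + v * Q a d| ≤ 2 * |t| :=
    calc |u * Q a c + v * Q a d| ≤ |u| * |Q a c| + |v| * |Q a d| := by
          simpa only [abs_mul] using abs_add_le (u * Q a c) (v * Q a d)
      _ ≤ |t| * 1 + |t| * 1 := by
          gcongr <;> exact abs_apply_le_one_of_mem_orthogonalGroup hQ a _
      _ = 2 * |t| := by ring
  rcases eq_or_ne b i with rfl | hbi
  · rw [mul_givensR_apply_left hij, show ∀ x y : ℝ, cos t * x + y - x = (cos t - 1) * x + y by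
      intros; ring]
    exact hentries hcos hsin _ _
  rcases eq_or_ne b j with rfl | hbj
  · rw [mul_givensR_apply_right hij, show ∀ x y : ℝ, y + cos t * x - x = y + (cos t - 1) * x by
      intros; ring]
    exact hentries (by rwa [abs_neg]) hcos _ _
  · rw [mul_givensR_apply_of_ne _ _ _ hbi hbj, sub_self, abs_zero]
    positivity

section congruence

variable (B : ι → Matrix (Fin n) (Fin n) ℝ) (t : ℝ) (ℓ : ι)

theorem congruence_givensR_apply_left (hij : i ≠ j) :
    congruence B (givensR n i j t) ℓ i i = (B ℓ i i + B ℓ j j) / 2 +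
      (cos (2 * t) * (B ℓ i i - B ℓ j j) + sin (2 * t) * (B ℓ i j + B ℓ j i)) / 2 := by
  rw [congruence, mul_givensR_apply_left hij]
  simp only [← transpose_apply (_ * B ℓ), transpose_mul, transpose_transpose,
    mul_givensR_apply_left hij]
  rw [cos_two_mul', sin_two_mul]
  simp only [transpose_apply]
  linear_combination (B ℓ i i + B ℓ j j) / 2 * sin_sq_add_cos_sq t

theorem congruence_givensR_apply_right (hij : i ≠ j) :
    congruence B (givensR n i j t) ℓ j j = (B ℓ i i + B ℓ j j) / 2 -
      (cos (2 * t) * (B ℓ i i - B ℓ j j) + sin (2 * t) * (B ℓ i j + B ℓ j i)) / 2 := by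
  rw [congruence, mul_givensR_apply_right hij]
  simp only [← transpose_apply (_ * B ℓ), transpose_mul, transpose_transpose,
    mul_givensR_apply_right hij]
  rw [cos_two_mul', sin_two_mul]
  simp only [transpose_apply]
  linear_combination (B ℓ i i + B ℓ j j) / 2 * sin_sq_add_cos_sq t

theorem congruence_givensR_apply_of_ne {k : Fin n} (hki : k ≠ i) (hkj : k ≠ j) :
    congruence B (givensR n i j t) ℓ k k = B ℓ k k := by
  rw [congruence, mul_givensR_apply_of_ne _ _ _ hki hkj, ← transpose_apply (_ * B ℓ),
    transpose_mul, transpose_transpose, mul_givensR_apply_of_ne _ _ _ hki hkj, transpose_apply]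

theorem sum_congruence_givensR_sq (hij : i ≠ j) :
    ∑ k, congruence B (givensR n i j t) ℓ k k ^ 2 =
      ∑ k, B ℓ k k ^ 2 +
        ((B ℓ i i - B ℓ j j) ^ 2 - (B ℓ i j + B ℓ j i) ^ 2) / 4 * (cos (4 * t) - 1) +
        (B ℓ i i - B ℓ j j) * (B ℓ i j + B ℓ j i) / 2 * sin (4 * t) := by
  rw [add_assoc, ← sub_eq_iff_eq_add', ← Finset.sum_sub_distrib, Finset.sum_eq_add i j hij]
  · rw [congruence_givensR_apply_left B t ℓ hij, congruence_givensR_apply_right B t ℓ hij,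
      show 4 * t = 2 * (2 * t) by ring, cos_two_mul (2 * t), sin_two_mul (2 * t)]
    linear_combination (B ℓ i j + B ℓ j i) ^ 2 / 2 * sin_sq_add_cos_sq (2 * t)
  · rintro k - ⟨hki, hkj⟩
    rw [congruence_givensR_apply_of_ne B t ℓ hki hkj, sub_self]
  · simp
  · simp

end congruence

variable [Fintype ι]

theorem exists_diagEnergy_congruence_givensR (hij : i ≠ j) (B : ι → Matrix (Fin n) (Fin n) ℝ) :
    ∃ c α, ∀ t, diagEnergy (congruence B (givensR n i j t)) =
      c + α * cos (4 * t) + diagCoupling B i j / 2 * sin (4 * t) := by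
  let α := ∑ ℓ, ((B ℓ i i - B ℓ j j) ^ 2 - (B ℓ i j + B ℓ j i) ^ 2) / 4
  refine ⟨diagEnergy B - α, α, fun t ↦ ?_⟩
  simp only [diagEnergy, diagCoupling, α, sum_congruence_givensR_sq B t _ hij, Finset.sum_div,
    Finset.sum_add_distrib, ← Finset.sum_mul]
  ring

theorem hasDerivAt_diagEnergy_congruence_givensR (hij : i ≠ j)
    (B : ι → Matrix (Fin n) (Fin n) ℝ) :
    HasDerivAt (fun t ↦ diagEnergy (congruence B (givensR n i j t)))
      (2 * diagCoupling B i j) 0 := by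
  obtain ⟨c, α, h⟩ := exists_diagEnergy_congruence_givensR hij B
  simp only [h]
  have h4 : HasDerivAt (fun t : ℝ ↦ 4 * t) 4 0 := by
    simpa using (hasDerivAt_id (0 : ℝ)).const_mul 4
  refine (((h4.cos.const_mul α).const_add c).fun_add
    (h4.sin.const_mul (diagCoupling B i j / 2))).congr_deriv ?_
  rw [mul_zero, sin_zero, cos_zero]
  ring

end Givens

section Gradient

section Derivative

variable {ι n : Type*}

theorem hasDerivAt_diagEnergy_congruence_one_add_smul [Fintype ι] [Fintype n] [DecidableEq n]
    (B : ι → Matrix n n ℝ) (H : Matrix n n ℝ) :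
    HasDerivAt (fun t : ℝ ↦ diagEnergy (congruence B (1 + t • H)))
      (∑ ℓ, ∑ k, 2 * B ℓ k k * (Hᵀ * B ℓ + B ℓ * H) k k) 0 := by
  have hquad (t : ℝ) (ℓ k) : congruence B (1 + t • H) ℓ k k =
      B ℓ k k + (t * (Hᵀ * B ℓ + B ℓ * H) k k + t ^ 2 * congruence B H ℓ k k) := by
    have : congruence B (1 + t • H) ℓ =
        B ℓ + (t • (Hᵀ * B ℓ + B ℓ * H) + t ^ 2 • congruence B H ℓ) := by
      simp only [congruence, transpose_add, transpose_one, transpose_smul, add_mul, mul_add,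
        one_mul, mul_one, smul_mul_assoc, mul_smul_comm]
      module
    simp [this, mul_add]
  simp only [diagEnergy, hquad]
  refine .fun_sum fun ℓ _ ↦ .fun_sum fun k _ ↦ ?_
  have hid := hasDerivAt_id (0 : ℝ)
  refine ((((hid.mul_const _).fun_add ((hid.pow 2).mul_const _)).const_add _).pow 2).congr_deriv ?_
  simp

theorem continuous_congruence [Fintype n] (A : ι → Matrix n n ℝ) : Continuous (congruence A) :=
  continuous_pi fun _ ↦
    (continuous_id.matrix_transpose.matrix_mul continuous_const).matrix_mul continuous_id

theorem continuous_diagEnergy [Fintype ι] [Fintype n] :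
    Continuous (diagEnergy : (ι → Matrix n n ℝ) → ℝ) := by
  unfold diagEnergy
  fun_prop

theorem continuous_diagCoupling [Fintype ι] (i j : n) :
    Continuous fun B : ι → Matrix n n ℝ ↦ diagCoupling B i j := by
  unfold diagCoupling
  fun_prop

theorem diagEnergy_nonneg [Fintype ι] [Fintype n] (B : ι → Matrix n n ℝ) : 0 ≤ diagEnergy B :=
  Finset.sum_nonneg fun _ _ ↦ Finset.sum_nonneg fun _ _ ↦ sq_nonneg _

end Derivative

variable {ι : Type*} [Fintype ι] {n : ℕ} {A : ι → Matrix (Fin n) (Fin n) ℝ}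
  {g : Matrix (Fin n) (Fin n) ℝ → Matrix (Fin n) (Fin n) ℝ}

namespace IsGradR

theorem transpose_mul_apply (hg : IsGradR (fun Q ↦ diagEnergy (congruence A Q)) g)
    (Q : Matrix (Fin n) (Fin n) ℝ) (a b : Fin n) :
    (Qᵀ * g Q) a b = ∑ ℓ, 2 * congruence A Q ℓ b b *
      (congruence A Q ℓ a b + congruence A Q ℓ b a) := by
  have hline (t : ℝ) : Q + t • (Q * single a b 1) = Q * (1 + t • single a b 1) := by
    rw [mul_add, mul_one, mul_smul_comm]
  have hderiv := hg Q (Q * single a b 1)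
  simp only [hline, congruence_mul] at hderiv
  have hsum : ∑ x, ∑ y, g Q x y * (Q * single a b 1 : Matrix (Fin n) (Fin n) ℝ) x y =
      (Qᵀ * g Q) a b := by
    rw [mul_apply]
    refine Finset.sum_congr rfl fun x _ ↦ ?_
    rw [Finset.sum_eq_single b (fun y _ hy ↦ by simp [mul_single_apply_of_ne, hy]) (by simp)]
    simp [mul_comm]
  rw [← hsum, hderiv.unique (hasDerivAt_diagEnergy_congruence_one_add_smul _ _)]
  refine Finset.sum_congr rfl fun ℓ _ ↦ ?_
  rw [Finset.sum_eq_single b (fun y _ hy ↦ ?_) (by simp)]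
  · simp
  · simp [mul_single_apply_of_ne, single_mul_apply_of_ne, hy]

theorem projGradR_eq (hg : IsGradR (fun Q ↦ diagEnergy (congruence A Q)) g)
    (Q : Matrix (Fin n) (Fin n) ℝ) :
    projGradR g Q = Q * -of (diagCoupling (congruence A Q)) := by
  rw [projGradR]
  congr 1
  ext a b
  simp only [Matrix.smul_apply, Matrix.sub_apply, Matrix.neg_apply, transpose_apply, of_apply,
    hg.transpose_mul_apply, diagCoupling, smul_eq_mul, Finset.mul_sum, ← Finset.sum_sub_distrib,
    ← Finset.sum_neg_distrib]
  exact Finset.sum_congr rfl fun ℓ _ ↦ by ring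

end IsGradR

theorem frobR_zero : frobR (0 : Matrix (Fin n) (Fin n) ℝ) = 0 := by
  simp [frobR]

theorem frobR_eq_sqrt_trace (X : Matrix (Fin n) (Fin n) ℝ) : frobR X = √(Xᵀ * X).trace := by
  rw [frobR, Finset.sum_comm]
  simp only [trace, diag_apply, mul_apply, transpose_apply, sq]

theorem frobR_mul_of_mem_orthogonalGroup {Q : Matrix (Fin n) (Fin n) ℝ}
    (hQ : Q ∈ orthogonalGroup (Fin n) ℝ) (X : Matrix (Fin n) (Fin n) ℝ) :
    frobR (Q * X) = frobR X := by
  rw [frobR_eq_sqrt_trace, frobR_eq_sqrt_trace, transpose_mul, Matrix.mul_assoc,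
    ← Matrix.mul_assoc Qᵀ, (mem_orthogonalGroup_iff' _ _).1 hQ, Matrix.one_mul]

theorem abs_apply_le_frobR (X : Matrix (Fin n) (Fin n) ℝ) (a b : Fin n) : |X a b| ≤ frobR X :=
  Real.abs_le_sqrt <|
    (Finset.single_le_sum (f := fun y ↦ X a y ^ 2) (fun _ _ ↦ sq_nonneg _)
      (Finset.mem_univ b)).trans
    (Finset.single_le_sum (f := fun x ↦ ∑ y, X x y ^ 2) (fun _ _ ↦ by positivity)
      (Finset.mem_univ a))

theorem continuous_frobR : Continuous (frobR : Matrix (Fin n) (Fin n) ℝ → ℝ) := by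
  unfold frobR
  fun_prop

end Gradient

section Convergence

open Asymptotics Topology

/-- `Q` is a Jacobi-G sequence for `f`, with pivots `(i k, j k)` and angles `θ k`, where `g` stands
for the Euclidean gradient of `f`. The pivots are unordered. -/
structure IsJacobiGSequence {n : ℕ} (f : Matrix (Fin n) (Fin n) ℝ → ℝ)
    (g : Matrix (Fin n) (Fin n) ℝ → Matrix (Fin n) (Fin n) ℝ) (δ : ℝ)
    (Q : ℕ → Matrix (Fin n) (Fin n) ℝ) (i j : ℕ → Fin n) (θ : ℕ → ℝ) : Prop where
  zero_mem : Q 0 ∈ orthogonalGroup (Fin n) ℝ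
  pivot_ne (k : ℕ) : i k ≠ j k
  succ_eq (k : ℕ) : Q (k + 1) = Q k * givensR n (i k) (j k) (θ k)
  le_abs_deriv (k : ℕ) : δ * frobR (projGradR g (Q k)) ≤
    |deriv (fun t ↦ f (Q k * givensR n (i k) (j k) t)) 0|
  isSmallestMaximizer (k : ℕ) :
    IsSmallestMaximizer (fun t ↦ f (Q k * givensR n (i k) (j k) t)) (θ k)

namespace IsJacobiGSequence

variable {ι : Type*} [Fintype ι] {n : ℕ} {f : Matrix (Fin n) (Fin n) ℝ → ℝ}
  {g : Matrix (Fin n) (Fin n) ℝ → Matrix (Fin n) (Fin n) ℝ} {δ : ℝ}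
  {Q : ℕ → Matrix (Fin n) (Fin n) ℝ} {i j : ℕ → Fin n} {θ : ℕ → ℝ}

theorem mem_orthogonalGroup (h : IsJacobiGSequence f g δ Q i j θ) (k : ℕ) :
    Q k ∈ orthogonalGroup (Fin n) ℝ := by
  induction k with
  | zero => exact h.zero_mem
  | succ k ih =>
    rw [h.succ_eq]
    exact mul_mem ih (givensR_mem_orthogonalGroup (h.pivot_ne k) _)

theorem angle_eq_zero (h : IsJacobiGSequence f g δ Q i j θ) {k : ℕ}
    (hk : f (Q (k + 1)) = f (Q k)) : θ k = 0 :=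
  (h.isSmallestMaximizer k).eq_zero_of_apply_eq <| by
    simpa only [givensR_zero, mul_one, ← h.succ_eq] using hk

variable {A : ι → Matrix (Fin n) (Fin n) ℝ}
  (h : IsJacobiGSequence (fun Q ↦ diagEnergy (congruence A Q)) g δ Q i j θ)

include h

theorem abs_diagCoupling_mul_abs_le (k : ℕ) :
    |diagCoupling (congruence A (Q k)) (i k) (j k) / 2| * |θ k| ≤
      diagEnergy (congruence A (Q (k + 1))) - diagEnergy (congruence A (Q k)) := by
  obtain ⟨c, α, hform⟩ := exists_diagEnergy_congruence_givensR (h.pivot_ne k) (congruence A (Q k))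
  simp only [← congruence_mul] at hform
  simpa only [givensR_zero, mul_one, ← h.succ_eq] using
    (h.isSmallestMaximizer k).abs_mul_abs_le hform

theorem abs_diagCoupling_le (k : ℕ) : |diagCoupling (congruence A (Q k)) (i k) (j k) / 2| ≤
    2 * diagEnergy (congruence A (Q (k + 1))) * |θ k| := by
  obtain ⟨c, α, hform⟩ := exists_diagEnergy_congruence_givensR (h.pivot_ne k) (congruence A (Q k))
  simp only [← congruence_mul] at hform
  simpa only [← h.succ_eq] using
    (h.isSmallestMaximizer k).abs_le_mul_abs hform fun _ ↦ diagEnergy_nonneg _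

theorem monotone_diagEnergy : Monotone fun k ↦ diagEnergy (congruence A (Q k)) :=
  monotone_nat_of_le_succ fun k ↦ sub_nonneg.1 <|
    (mul_nonneg (abs_nonneg _) (abs_nonneg _)).trans (h.abs_diagCoupling_mul_abs_le k)

theorem bddAbove_range_diagEnergy :
    BddAbove (Set.range fun k ↦ diagEnergy (congruence A (Q k))) := by
  have hcont := continuous_diagEnergy.comp (continuous_congruence A)
  refine ((isCompact_orthogonalGroup (Fin n)).bddAbove_image hcont.continuousOn).mono ?_
  rintro _ ⟨k, rfl⟩
  exact ⟨Q k, h.mem_orthogonalGroup k, rfl⟩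

variable (hg : IsGradR (fun Q ↦ diagEnergy (congruence A Q)) g) (hδ : 0 < δ)

include hg hδ

theorem diagCoupling_isBigO (a b : Fin n) :
    (fun k ↦ diagCoupling (congruence A (Q k)) a b) =O[atTop]
      fun k ↦ diagCoupling (congruence A (Q k)) (i k) (j k) / 2 := by
  refine .of_bound (4 / δ) (.of_forall fun k ↦ ?_)
  have hpivot : δ * frobR (projGradR g (Q k)) ≤
      |2 * diagCoupling (congruence A (Q k)) (i k) (j k)| := by
    rw [← (hasDerivAt_diagEnergy_congruence_givensR (h.pivot_ne k) _).deriv]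
    simpa only [congruence_mul] using h.le_abs_deriv k
  have hentry : |diagCoupling (congruence A (Q k)) a b| ≤ frobR (projGradR g (Q k)) := by
    rw [hg.projGradR_eq, frobR_mul_of_mem_orthogonalGroup (h.mem_orthogonalGroup k)]
    simpa using abs_apply_le_frobR (-of (diagCoupling (congruence A (Q k)))) a b
  rw [Real.norm_eq_abs, Real.norm_eq_abs, div_mul_eq_mul_div, le_div_iff₀' hδ]
  calc δ * |diagCoupling (congruence A (Q k)) a b|
      ≤ |2 * diagCoupling (congruence A (Q k)) (i k) (j k)| := by
        refine le_trans ?_ hpivot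
        gcongr
    _ = 4 * |diagCoupling (congruence A (Q k)) (i k) (j k) / 2| := by
        rw [abs_mul, abs_div, abs_two]
        ring

theorem summable_abs_angle : Summable fun k ↦ |θ k| := by
  set energy := fun k ↦ diagEnergy (congruence A (Q k))
  have hlim : Tendsto energy atTop (𝓝 (⨆ k, energy k)) :=
    tendsto_atTop_ciSup h.monotone_diagEnergy h.bddAbove_range_diagEnergy
  obtain ⟨ε, hε, hO⟩ := exists_isBigO_rpow_diagEnergy_sub A (⨆ k, energy k)
  let P (k : ℕ) : orthogonalGroup (Fin n) ℝ := ⟨Q k, h.mem_orthogonalGroup k⟩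
  have hP : Tendsto P atTop
      (comap (fun P ↦ diagEnergy (congruence A P) - ⨆ k, energy k) (𝓝 0)) :=
    tendsto_comap_iff.2 (sub_self (⨆ k, energy k) ▸ hlim.sub_const _)
  have hpivot : (fun k ↦ ∑ p : Fin n × Fin n, |diagCoupling (congruence A (Q k)) p.1 p.2|)
      =O[atTop] fun k ↦ diagCoupling (congruence A (Q k)) (i k) (j k) / 2 :=
    IsBigO.fun_sum fun (p : Fin n × Fin n) _ ↦ (h.diagCoupling_isBigO hg hδ p.1 p.2).abs_left
  refine summable_of_rpow_isBigO hε (e := fun k ↦ |energy k - ⨆ k, energy k|)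
    (fun k ↦ abs_nonneg _) (fun k ↦ abs_nonneg _) ?_ ?_ ((hO.comp_tendsto hP).trans hpivot)
  all_goals
    intro k
    have hgap (k) : |energy k - ⨆ k, energy k| = (⨆ k, energy k) - energy k := by
      rw [abs_sub_comm, abs_of_nonneg (sub_nonneg.2 (le_ciSup h.bddAbove_range_diagEnergy k))]
    simp only [hgap]
  · linarith [h.abs_diagCoupling_mul_abs_le k]
  · exact fun hk ↦ abs_eq_zero.2 (h.angle_eq_zero (sub_right_inj.1 hk))

theorem exists_tendsto :
    ∃ P ∈ orthogonalGroup (Fin n) ℝ, Tendsto Q atTop (𝓝 P) := by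
  have hcauchy (a b : Fin n) : ∃ x, Tendsto (fun k ↦ Q k a b) atTop (𝓝 x) := by
    refine cauchySeq_tendsto_of_complete <| cauchySeq_of_dist_le_of_summable (fun k ↦ 2 * |θ k|)
      (fun k ↦ ?_) ((h.summable_abs_angle hg hδ).mul_left 2)
    rw [dist_comm, Real.dist_eq, h.succ_eq]
    exact abs_mul_givensR_sub_le (h.pivot_ne k) _ (h.mem_orthogonalGroup k) a b
  choose P hP using hcauchy
  have hlim : Tendsto Q atTop (𝓝 (of P)) :=
    tendsto_pi_nhds.2 fun a ↦ tendsto_pi_nhds.2 fun b ↦ hP a b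
  exact ⟨of P, (isCompact_orthogonalGroup _).isClosed.mem_of_tendsto hlim
    (.of_forall h.mem_orthogonalGroup), hlim⟩

theorem tendsto_pivot_diagCoupling :
    Tendsto (fun k ↦ diagCoupling (congruence A (Q k)) (i k) (j k) / 2) atTop (𝓝 0) := by
  obtain ⟨M, hM⟩ := h.bddAbove_range_diagEnergy
  have hθ : Tendsto (fun k ↦ 2 * M * |θ k|) atTop (𝓝 0) := by
    simpa using (h.summable_abs_angle hg hδ).tendsto_atTop_zero.const_mul (2 * M)
  refine squeeze_zero_norm (fun k ↦ (h.abs_diagCoupling_le k).trans ?_) hθ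
  gcongr
  exact hM ⟨k + 1, rfl⟩

theorem diagCoupling_eq_zero_of_tendsto {P : Matrix (Fin n) (Fin n) ℝ}
    (hP : Tendsto Q atTop (𝓝 P)) : diagCoupling (congruence A P) = 0 := by
  ext a b
  have hcont := (continuous_diagCoupling a b).comp (continuous_congruence A)
  exact tendsto_nhds_unique ((hcont.tendsto P).comp hP)
    ((h.diagCoupling_isBigO hg hδ a b).trans_tendsto (h.tendsto_pivot_diagCoupling hg hδ))

end IsJacobiGSequence

end Convergence

theorem jacobiG_global_convergence_matrices_general {ι : Type*} [Fintype ι] {n : ℕ}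
    (A : ι → Matrix (Fin n) (Fin n) ℝ)
    (f : Matrix (Fin n) (Fin n) ℝ → ℝ)
    (hf : ∀ Q : Matrix (Fin n) (Fin n) ℝ, f Q =
      ∑ ℓ, ∑ k, ((Qᵀ * A ℓ * Q) k k) ^ 2)
    (g : Matrix (Fin n) (Fin n) ℝ → Matrix (Fin n) (Fin n) ℝ)
    (hg : IsGradR f g)
    (δ : ℝ) (hδ0 : 0 < δ)
    (Q : ℕ → Matrix (Fin n) (Fin n) ℝ) (hQ0 : (Q 0)ᵀ * Q 0 = 1)
    (i j : ℕ → Fin n) (θ : ℕ → ℝ)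
    (hij : ∀ k, i k ≠ j k)
    (hupd : ∀ k, Q (k + 1) = Q k * givensR n (i k) (j k) (θ k))
    (hpair : ∀ k, δ * frobR (projGradR g (Q k)) ≤
      |deriv (fun t : ℝ => f (Q k * givensR n (i k) (j k) t)) 0|)
    (hmax : ∀ k t, f (Q k * givensR n (i k) (j k) t) ≤ f (Q (k + 1)))
    (hminabs : ∀ k t, (∀ s, f (Q k * givensR n (i k) (j k) s) ≤
        f (Q k * givensR n (i k) (j k) t)) → |θ k| ≤ |t|) :
    ∃ Qs : Matrix (Fin n) (Fin n) ℝ, Qsᵀ * Qs = 1 ∧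
      Tendsto (fun k => frobR (Q k - Qs)) atTop (nhds 0) ∧
      projGradR g Qs = 0 := by
  obtain rfl : f = fun Q ↦ diagEnergy (congruence A Q) := funext hf
  have h : IsJacobiGSequence (fun Q ↦ diagEnergy (congruence A Q)) g δ Q i j θ :=
    { zero_mem := (mem_orthogonalGroup_iff' _ _).2 hQ0
      pivot_ne := hij
      succ_eq := hupd
      le_abs_deriv := hpair
      isSmallestMaximizer := fun k ↦
        ⟨fun t ↦ (hmax k t).trans_eq (by rw [hupd]), hminabs k⟩ }
  obtain ⟨P, hP, hlim⟩ := h.exists_tendsto hg hδ0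
  refine ⟨P, (mem_orthogonalGroup_iff' _ _).1 hP, ?_, ?_⟩
  · exact (continuous_frobR.tendsto' 0 0 frobR_zero).comp (tendsto_sub_nhds_zero_iff.2 hlim)
  · rw [hg.projGradR_eq, h.diagCoupling_eq_zero_of_tendsto hg hδ0 hlim, of_zero, neg_zero, mul_zero]

/-- Global convergence of the Jacobi-G algorithm on O(n) for the simultaneous approximate
diagonalization cost of symmetric matrices: for any starting point, the Jacobi-G
iterates converge to a single limit point, which is a stationary point of `f` on O(n). -/
theorem jacobiG_global_convergence_matrices {n L : ℕ}
    (A : Fin L → Matrix (Fin n) (Fin n) ℝ)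
    (hsym : ∀ ℓ, (A ℓ)ᵀ = A ℓ)
    (f : Matrix (Fin n) (Fin n) ℝ → ℝ)
    (hf : ∀ Q : Matrix (Fin n) (Fin n) ℝ, f Q =
      ∑ ℓ, ∑ k, ((Qᵀ * A ℓ * Q) k k) ^ 2)
    (g : Matrix (Fin n) (Fin n) ℝ → Matrix (Fin n) (Fin n) ℝ)
    (hg : IsGradR f g)
    (δ : ℝ) (hδ0 : 0 < δ) (hδn : δ < 2 / (n : ℝ))
    (Q : ℕ → Matrix (Fin n) (Fin n) ℝ) (hQ0 : (Q 0)ᵀ * Q 0 = 1)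
    (i j : ℕ → Fin n) (θ : ℕ → ℝ)
    (hij : ∀ k, i k < j k)
    (hupd : ∀ k, Q (k + 1) = Q k * givensR n (i k) (j k) (θ k))
    (hpair : ∀ k, δ * frobR (projGradR g (Q k)) ≤
      |deriv (fun t : ℝ => f (Q k * givensR n (i k) (j k) t)) 0|)
    (hmax : ∀ k t, f (Q k * givensR n (i k) (j k) t) ≤ f (Q (k + 1)))
    (hminabs : ∀ k t, (∀ s, f (Q k * givensR n (i k) (j k) s) ≤
        f (Q k * givensR n (i k) (j k) t)) → |θ k| ≤ |t|) :
    ∃ Qs : Matrix (Fin n) (Fin n) ℝ, Qsᵀ * Qs = 1 ∧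
      Tendsto (fun k => frobR (Q k - Qs)) atTop (nhds 0) ∧
      projGradR g Qs = 0 :=
  jacobiG_global_convergence_matrices_general A f hf g hg δ hδ0 Q hQ0 i j θ (fun k ↦ (hij k).ne)
    hupd hpair hmax hminabs
end

section
/- Let f(U) = Σ_{ℓ=1}^L α_ℓ Σ_{k=1}^n |W^(ℓ)(U)_{k⋯k}|², where for each ℓ, W^(ℓ)(U)_{k₁⋯k_{d_ℓ}} = Σ_{a₁,…,a_{d_ℓ}} A^(ℓ)_{a₁⋯a_{d_ℓ}} ∏_{p=1}^{t_ℓ} conj(U_{a_p k_p}) ∏_{p=t_ℓ+1}^{d_ℓ} U_{a_p k_p}, and set d = max(d₁,…,d_L). Then there exists a Hermitian complex tensor B of order 2d such that for all U ∈ U(n), f(U) equals the trace form of B at U, i.e. f(U) = Σ_{k=1}^n Σ_{i₁,…,i_d,j₁,…,j_d} B_{i₁⋯i_d j₁⋯j_d} ∏_{m=1}^d conj(U_{i_m k}) ∏_{m=1}^d U_{j_m k}. -/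
open Matrix BigOperators Filter

/-!
Writing `|W|² = W * conj W` and exchanging, at the linear positions only, the indices of the two
factors turns the coefficients `A a * conj (A b)` into a Hermitian tensor whose form is `|W|²`.
A form of order `2e` is raised to order `2(e + r)` by tensoring with the identity, which multiplies
its value at `u` by `⟨u, u⟩ ^ r`; this factor is `1` at the columns of a unitary matrix.
All pieces then have the same order, and real combinations of Hermitian tensors are Hermitian.
-/

open scoped Kronecker

section Kronecker

variable {R k l m n : Type*} [CommSemiring R] [Fintype m] [Fintype n]

theorem mul_dotProduct_mul (x x' : m → R) (y y' : n → R) :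
    (fun p : m × n => x p.1 * y p.2) ⬝ᵥ (fun p => x' p.1 * y' p.2) =
      (x ⬝ᵥ x') * (y ⬝ᵥ y') := by
  simp only [dotProduct, Fintype.sum_prod_type, Finset.sum_mul_sum, mul_mul_mul_comm]

theorem kronecker_mulVec_mul (A : Matrix k m R) (B : Matrix l n R) (x : m → R) (y : n → R) :
    (A ⊗ₖ B) *ᵥ (fun p => x p.1 * y p.2) = fun p => (A *ᵥ x) p.1 * (B *ᵥ y) p.2 :=
  funext fun p => mul_dotProduct_mul (A p.1) x (B p.2) y

end Kronecker

section TensorPower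

variable {R ι : Type*} [CommSemiring R]

/-- The tensor power `u ⊗ ⋯ ⊗ u` of a vector, with one factor for each element of `m`, given by its
coordinates on the multi-indices `m → ι`. -/
def tensorPower (m : Type*) [Fintype m] (u : ι → R) : (m → ι) → R :=
  fun a => ∏ p, u (a p)

theorem star_tensorPower [StarRing R] (m : Type*) [Fintype m] (u : ι → R) :
    star (tensorPower m u) = tensorPower m (star u) :=
  funext fun _ => map_prod (starRingEnd R) _ _

theorem tensorPower_comp_appendEquiv (e r : ℕ) (u : ι → R) :
    tensorPower (Fin (e + r)) u ∘ Fin.appendEquiv e r =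
      fun p => tensorPower (Fin e) u p.1 * tensorPower (Fin r) u p.2 := by
  ext p
  simp only [Function.comp_apply, Fin.appendEquiv, Equiv.coe_fn_mk, tensorPower, Fin.prod_univ_add,
    Fin.append_left, Fin.append_right]

theorem tensorPower_dotProduct_tensorPower [Fintype ι] (m : Type*) [Fintype m] [DecidableEq m]
    (v u : ι → R) :
    tensorPower m v ⬝ᵥ tensorPower m u = (v ⬝ᵥ u) ^ Fintype.card m := by
  simp only [dotProduct, tensorPower, ← Finset.prod_mul_distrib]
  rw [← Finset.card_univ, ← Finset.prod_const, Finset.prod_univ_sum, Fintype.piFinset_univ]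

end TensorPower

section TensorForm

variable {R ι m : Type*} [CommSemiring R] [StarRing R] [Fintype ι] [Fintype m] [DecidableEq m]

/-- The form `u ↦ ⟨u ⊗ ⋯ ⊗ u, B (u ⊗ ⋯ ⊗ u)⟩` of a tensor `B` of even order. The two groups of
indices of `B` are its row and column multi-indices, so a Hermitian tensor is a Hermitian matrix.
The trace form of `B` at a matrix is the sum of these values over the columns. -/
def tensorForm (B : Matrix (m → ι) (m → ι) R) (u : ι → R) : R :=
  star (tensorPower m u) ⬝ᵥ B *ᵥ tensorPower m u

theorem tensorForm_eq_sum (B : Matrix (m → ι) (m → ι) R) (u : ι → R) :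
    tensorForm B u = ∑ i, ∑ j, B i j * (∏ p, star (u (i p))) * ∏ p, u (j p) := by
  rw [tensorForm, star_tensorPower]
  simp only [dotProduct, mulVec, tensorPower, Pi.star_apply, Finset.mul_sum, mul_left_comm,
    mul_assoc]

theorem tensorForm_smul (c : R) (B : Matrix (m → ι) (m → ι) R) (u : ι → R) :
    tensorForm (c • B) u = c * tensorForm B u := by
  rw [tensorForm, smul_mulVec, dotProduct_smul, smul_eq_mul, tensorForm]

theorem tensorForm_sum {Λ : Type*} (s : Finset Λ) (B : Λ → Matrix (m → ι) (m → ι) R) (u : ι → R) :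
    tensorForm (∑ ℓ ∈ s, B ℓ) u = ∑ ℓ ∈ s, tensorForm (B ℓ) u := by
  simp only [tensorForm, sum_mulVec, dotProduct_sum]

end TensorForm

section PadTensor

variable {R ι : Type*} [CommSemiring R] [StarRing R] {e d : ℕ}

/-- The tensor `B ⊗ 1` obtained by appending `r` indices to each of the two groups of indices of
`B`; it brings forms of different orders to a common order. -/
def padTensor [DecidableEq ι] (r : ℕ) (B : Matrix (Fin e → ι) (Fin e → ι) R) :
    Matrix (Fin (e + r) → ι) (Fin (e + r) → ι) R :=
  (B ⊗ₖ (1 : Matrix (Fin r → ι) (Fin r → ι) R)).reindex (Fin.appendEquiv e r) (Fin.appendEquiv e r)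

theorem isHermitian_padTensor [DecidableEq ι] (r : ℕ) {B : Matrix (Fin e → ι) (Fin e → ι) R}
    (hB : B.IsHermitian) : (padTensor r B).IsHermitian := by
  refine IsHermitian.reindex ?_ _
  rw [IsHermitian, conjTranspose_kronecker, hB.eq, conjTranspose_one]

theorem tensorForm_padTensor [Fintype ι] [DecidableEq ι] (r : ℕ)
    (B : Matrix (Fin e → ι) (Fin e → ι) R) (u : ι → R) :
    tensorForm (padTensor r B) u = tensorForm B u * (star u ⬝ᵥ u) ^ r := by
  simp only [tensorForm, padTensor, star_tensorPower, reindex_apply]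
  rw [submatrix_mulVec_equiv, Equiv.symm_symm, dotProduct_comp_equiv_symm,
    tensorPower_comp_appendEquiv, tensorPower_comp_appendEquiv, kronecker_mulVec_mul,
    mul_dotProduct_mul, one_mulVec, tensorPower_dotProduct_tensorPower, Fintype.card_fin]

theorem exists_isHermitian_tensorForm_eq_of_le [Fintype ι] (hed : e ≤ d)
    {B : Matrix (Fin e → ι) (Fin e → ι) R} (hB : B.IsHermitian) :
    ∃ C : Matrix (Fin d → ι) (Fin d → ι) R, C.IsHermitian ∧
      ∀ u : ι → R, star u ⬝ᵥ u = 1 → tensorForm C u = tensorForm B u := by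
  classical
  obtain ⟨r, rfl⟩ := Nat.exists_eq_add_of_le hed
  refine ⟨padTensor r B, isHermitian_padTensor r hB, fun u hu => ?_⟩
  rw [tensorForm_padTensor, hu, one_pow, mul_one]

end PadTensor

section MixedForm

variable {R ι m : Type*} (S : Set m) [DecidablePred (· ∈ S)]

theorem involutive_piecewise_prod :
    Function.Involutive fun x : (m → ι) × (m → ι) =>
      (S.piecewise x.1 x.2, S.piecewise x.2 x.1) := by
  rintro ⟨i, j⟩
  ext p <;> by_cases hp : p ∈ S <;> simp [hp]

variable [CommSemiring R] [StarRing R]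

/-- The value `W(u)` of the form with coefficients `A`, antilinear in the arguments at the positions
in `S` and linear in the others, when all its arguments are `u`. -/
def mixedForm [Fintype ι] [Fintype m] [DecidableEq m] (A : (m → ι) → R) (u : ι → R) : R :=
  ∑ a, A a * ∏ p, if p ∈ S then star (u (a p)) else u (a p)

/-- The coefficients `A a * star (A b)` of `W * star W`, with the entries of `a` and `b` distributed
so that the row multi-index collects the conjugated arguments. -/
def mixedGram (A : (m → ι) → R) : Matrix (m → ι) (m → ι) R :=
  of fun i j => A (S.piecewise i j) * star (A (S.piecewise j i))

theorem isHermitian_mixedGram (A : (m → ι) → R) : (mixedGram S A).IsHermitian :=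
  IsHermitian.ext fun i j => by
    simp only [mixedGram, of_apply, star_mul', star_star, mul_comm]

theorem prod_mixed_mul_star_prod_mixed [Fintype m] (u : ι → R) (i j : m → ι) :
    (∏ p, if p ∈ S then star (u (S.piecewise i j p)) else u (S.piecewise i j p)) *
      star (∏ p, if p ∈ S then star (u (S.piecewise j i p)) else u (S.piecewise j i p)) =
      (∏ p, star (u (i p))) * ∏ p, u (j p) := by
  rw [star_prod, ← Finset.prod_mul_distrib, ← Finset.prod_mul_distrib]
  refine Finset.prod_congr rfl fun p _ => ?_
  by_cases hp : p ∈ S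
  · simp [hp]
  · simp [hp, mul_comm]

theorem tensorForm_mixedGram [Fintype ι] [Fintype m] [DecidableEq m] (A : (m → ι) → R)
    (u : ι → R) :
    tensorForm (mixedGram S A) u = mixedForm S A u * star (mixedForm S A u) := by
  rw [tensorForm_eq_sum, mixedForm, star_sum, Finset.sum_mul_sum, ← Fintype.sum_prod_type',
    ← Fintype.sum_prod_type']
  refine Fintype.sum_equiv (involutive_piecewise_prod S).toPerm _ _ fun ⟨i, j⟩ => ?_
  simp only [mixedGram, of_apply, Function.Involutive.coe_toPerm]
  rw [mul_assoc, ← prod_mixed_mul_star_prod_mixed S u i j, star_mul', mul_mul_mul_comm]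

end MixedForm

theorem exists_hermitian_trace_form_general {R ι κ Λ : Type*} [CommSemiring R] [StarRing R]
    [Fintype ι] [Fintype κ] [Fintype Λ] (e : Λ → ℕ) (S : ∀ ℓ, Set (Fin (e ℓ)))
    [∀ ℓ, DecidablePred (· ∈ S ℓ)] (α : Λ → R) (hα : ∀ ℓ, IsSelfAdjoint (α ℓ))
    (A : ∀ ℓ, (Fin (e ℓ) → ι) → R) {d : ℕ} (hd : ∀ ℓ, e ℓ ≤ d) :
    ∃ B : Matrix (Fin d → ι) (Fin d → ι) R, B.IsHermitian ∧
      ∀ U : Matrix ι κ R, (∀ k, star (U.col k) ⬝ᵥ U.col k = 1) →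
        ∑ ℓ, α ℓ * ∑ k, mixedForm (S ℓ) (A ℓ) (U.col k) * star (mixedForm (S ℓ) (A ℓ) (U.col k)) =
          ∑ k, tensorForm B (U.col k) := by
  choose C hC hCform using fun ℓ =>
    exists_isHermitian_tensorForm_eq_of_le (hd ℓ) (isHermitian_mixedGram (S ℓ) (A ℓ))
  refine ⟨∑ ℓ, α ℓ • C ℓ, isSelfAdjoint_sum _ fun ℓ _ => (hC ℓ).smul (hα ℓ), fun U hU => ?_⟩
  simp only [tensorForm_sum, tensorForm_smul, hCform _ _ (hU _), tensorForm_mixedGram,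
    Finset.mul_sum]
  exact Finset.sum_comm

/-- Existence of a Hermitian tensor representation: the ICA cost function
`f(U) = Σ_ℓ α_ℓ Σ_k |W^(ℓ)(U)_{k⋯k}|²` admits, with `d = max(d₁,…,d_L)`, a Hermitian
complex tensor `B` of order `2d` (indexed by `(i₁,…,i_d,j₁,…,j_d)`, with
`B_{i⃗ j⃗} = conj(B_{j⃗ i⃗})`) such that for all unitary `U`,
`f(U) = Σ_k Σ_{i⃗,j⃗} B_{i⃗ j⃗} Π_m conj(U_{i_m k}) Π_m U_{j_m k}`. -/
theorem exists_hermitian_trace_form {n L : ℕ}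
    (dl tl : Fin L → ℕ) (htd : ∀ ℓ, tl ℓ ≤ dl ℓ) (hdl : ∀ ℓ, 1 ≤ dl ℓ)
    (α : Fin L → ℝ)
    (A : (ℓ : Fin L) → ((Fin (dl ℓ) → Fin n) → ℂ))
    (f : Matrix (Fin n) (Fin n) ℂ → ℝ)
    (hf : ∀ U : Matrix (Fin n) (Fin n) ℂ, f U =
      ∑ ℓ, α ℓ * ∑ k : Fin n, Complex.normSq
        (∑ a : Fin (dl ℓ) → Fin n, A ℓ a *
          ∏ p : Fin (dl ℓ), (if (p : ℕ) < tl ℓ then (starRingEnd ℂ) (U (a p) k)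
            else U (a p) k)))
    (d : ℕ) (hdmax : d = Finset.univ.sup dl) :
    ∃ B : (Fin d → Fin n) → (Fin d → Fin n) → ℂ,
      (∀ iv jv, B iv jv = (starRingEnd ℂ) (B jv iv)) ∧
      ∀ U : Matrix (Fin n) (Fin n) ℂ, Uᴴ * U = 1 →
        (f U : ℂ) = ∑ k : Fin n, ∑ iv : Fin d → Fin n, ∑ jv : Fin d → Fin n,
          B iv jv * (∏ m, (starRingEnd ℂ) (U (iv m) k)) * ∏ m, U (jv m) k := by
  obtain ⟨B, hB, hform⟩ := exists_hermitian_trace_form_general (κ := Fin n) dl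
    (fun ℓ => {p | (p : ℕ) < tl ℓ}) (fun ℓ => (α ℓ : ℂ)) (fun ℓ => Complex.conj_ofReal (α ℓ)) A
    fun ℓ => hdmax ▸ Finset.le_sup (Finset.mem_univ ℓ)
  refine ⟨B, fun iv jv => (hB.apply iv jv).symm, fun U hU => ?_⟩
  simpa [hf, mixedForm, tensorForm_eq_sum, Complex.normSq_eq_conj_mul_self, mul_comm] using
    hform U fun k => congr_fun₂ hU k k |>.trans (one_apply_eq k)
end
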